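/- There exists a negative continuous subharmonic exhaustion function u of the unit disc 𝔻 with finite Monge–Ampère mass ∫_𝔻 dd^c u < ∞ such that the Poletsky–Stessin Hardy space H^1_u(𝔻) is a proper subset of the classical Hardy space H^1(𝔻). -/

import Mathlib

open MeasureTheory Filter Metric Complex Set
open scoped Real ENNReal Topology

noncomputable section

/-- The Laplacian of a real-valued function on `ℂ ≅ ℝ²`. -/
def lap (φ : ℂ → ℝ) (z : ℂ) : ℝ :=
  fderiv ℝ (fun w => fderiv ℝ φ w 1) z 1 +
    fderiv ℝ (fun w => fderiv ℝ φ w Complex.I) z Complex.I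

/-- `h` is harmonic on `s`. -/
def HarmonicOn (h : ℂ → ℝ) (s : Set ℂ) : Prop :=
  ContDiffOn ℝ 2 h s ∧ ∀ z ∈ s, lap h z = 0

/-- `u` is subharmonic on `s` (continuous with the sub-mean-value property). -/
def SubharmonicOn (u : ℂ → ℝ) (s : Set ℂ) : Prop :=
  ContinuousOn u s ∧ ∀ z ∈ s, ∀ r : ℝ, 0 < r → closedBall z r ⊆ s →
    u z ≤ (2 * Real.pi)⁻¹ *
      ∫ t in (0:ℝ)..(2 * Real.pi), u (z + (r : ℂ) * Complex.exp ((t : ℂ) * Complex.I))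

/-- `u` is a negative continuous subharmonic exhaustion function for `Ω`:
sublevel sets `{u < c}`, `c < 0`, are relatively compact in `Ω`. -/
structure IsExhaustion (u : ℂ → ℝ) (Ω : Set ℂ) : Prop where
  neg : ∀ z ∈ Ω, u z < 0
  subh : SubharmonicOn u Ω
  exh : ∀ c : ℝ, c < 0 → IsCompact (closure {z | z ∈ Ω ∧ u z < c}) ∧
    closure {z | z ∈ Ω ∧ u z < c} ⊆ Ω

/-- `ν` is the Riesz measure `dd^c u = (1/4) Δu dA` of `u` on `Ω`, characterized
distributionally: `∫ φ dν = (1/4) ∫_Ω u Δφ dA` for test functions `φ`. -/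
def IsRieszMeasure (u : ℂ → ℝ) (Ω : Set ℂ) (ν : Measure ℂ) : Prop :=
  ν Ωᶜ = 0 ∧
  ∀ φ : ℂ → ℝ, ContDiff ℝ 2 φ → HasCompactSupport φ → tsupport φ ⊆ Ω →
    ∫ z, φ z ∂ν = (4 : ℝ)⁻¹ * ∫ z in Ω, u z * lap φ z

/-- `μ` is the Monge–Ampère measure `μ_{u,r} = dd^c max(u,r) - χ_{Ω∖{u<r}} dd^c u`,
where `ν = dd^c u`. -/
def IsMAMeasure (u : ℂ → ℝ) (Ω : Set ℂ) (ν : Measure ℂ) (r : ℝ) (μ : Measure ℂ) : Prop :=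
  ∃ νr : Measure ℂ, IsRieszMeasure (fun z => max (u z) r) Ω νr ∧
    μ = νr - ν.restrict {z | z ∈ Ω ∧ r ≤ u z}

/-- The `p`-th power of the Poletsky–Stessin Hardy "norm",
`limsup_{r→0⁻} ∫ |f|^p dμ_{u,r}`. -/
def psNormPow (p : ℝ) (μfam : ℝ → Measure ℂ) (f : ℂ → ℂ) : ℝ≥0∞ :=
  Filter.limsup (fun r => ∫⁻ z, ENNReal.ofReal (‖f z‖ ^ p) ∂(μfam r))
    (nhdsWithin 0 (Set.Iio 0))

/-- The Poletsky–Stessin Hardy norm. -/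
def psNorm (p : ℝ) (μfam : ℝ → Measure ℂ) (f : ℂ → ℂ) : ℝ≥0∞ :=
  psNormPow p μfam f ^ (1 / p)

/-- Membership in the Poletsky–Stessin Hardy space `H^p_u(Ω)`, where `μfam r = μ_{u,r}`. -/
def MemPS (p : ℝ) (Ω : Set ℂ) (μfam : ℝ → Measure ℂ) (f : ℂ → ℂ) : Prop :=
  DifferentiableOn ℂ f Ω ∧ psNormPow p μfam f < ⊤

/-- Membership in the classical Hardy space `H^p(Ω)`: `|f|^p` has a harmonic majorant. -/
def MemHClassical (p : ℝ) (Ω : Set ℂ) (f : ℂ → ℂ) : Prop :=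
  DifferentiableOn ℂ f Ω ∧
    ∃ h : ℂ → ℝ, HarmonicOn h Ω ∧ ∀ z ∈ Ω, ‖f z‖ ^ p ≤ h z

/-- A bounded domain in `ℂ` containing `0` whose boundary is an analytic Jordan curve:
there is a conformal map of the unit disc onto `Ω` extending analytically and injectively
across the closed disc, carrying the unit circle onto the boundary of `Ω`. -/
structure AnalyticJordanDomain (Ω : Set ℂ) : Prop where
  isOpen : IsOpen Ω
  isConnected : IsConnected Ω
  isBounded : Bornology.IsBounded Ω
  zero_mem : (0:ℂ) ∈ Ω
  analyticBoundary : ∃ (U : Set ℂ) (ψ : ℂ → ℂ), IsOpen U ∧ closedBall (0:ℂ) 1 ⊆ U ∧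
    DifferentiableOn ℂ ψ U ∧ Set.InjOn ψ U ∧ ψ '' ball (0:ℂ) 1 = Ω ∧
    ψ '' sphere (0:ℂ) 1 = frontier Ω

/-- `μ` is the boundary Monge–Ampère measure: the weak* limit of the measures
`μfam r = μ_{u,r}` as `r → 0⁻`. -/
def IsBoundaryMA (μfam : ℝ → Measure ℂ) (μ : Measure ℂ) : Prop :=
  ∀ φ : ℂ → ℝ, Continuous φ →
    Filter.Tendsto (fun r => ∫ z, φ z ∂(μfam r)) (nhdsWithin 0 (Set.Iio 0))
      (nhds (∫ z, φ z ∂μ))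

/-- `f` has nontangential limit `L` at the boundary point `ξ` of `Ω`. -/
def NTLim (Ω : Set ℂ) (f : ℂ → ℂ) (ξ : ℂ) (L : ℂ) : Prop :=
  ∀ C : ℝ, 1 < C →
    Filter.Tendsto f
      (nhdsWithin ξ {z | z ∈ Ω ∧ dist z ξ ≤ C * infDist z (frontier Ω)}) (nhds L)

/-- Arc length measure on the boundary of `Ω` (1-dimensional Hausdorff measure). -/
def arcLen (Ω : Set ℂ) : Measure ℂ := (μH[1] : Measure ℂ).restrict (frontier Ω)

/-- The classical Hardy space `H^1(𝔻)`: holomorphic on the unit disc with uniformly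
bounded integral means `∫_0^{2π} |f(r e^{iθ})| dθ`, `0 < r < 1`. -/
def MemH1Disc (f : ℂ → ℂ) : Prop :=
  DifferentiableOn ℂ f (ball (0:ℂ) 1) ∧
    ∃ M : ℝ, ∀ r : ℝ, 0 < r → r < 1 →
      (∫ θ in (0:ℝ)..(2 * Real.pi),
        ‖f ((r : ℂ) * Complex.exp ((θ : ℂ) * Complex.I))‖) ≤ M

/-!
For `u` of class `C²` the Lelong–Jensen formula writes the Monge–Ampère measures as
`4 ∫ ψ dμ_r = ∫_{u < r} ((r - u) Δψ + ψ Δu)`, the weak limit of the densities obtained by smoothing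
`max (r - u) 0`. Apply it to `ψ = √(1 + |f|²)`, which is smooth and subharmonic and differs from
`|f|` by at most `1`. If `Δu ≥ 4c` and `u ≤ -c (1 - |z|²)` on the disc, then, comparing `u` with
`c (|z|² - 1)`, the circle averages of `|f|` are controlled by `∫ ψ dμ_r`, so that `H^1_u ⊆ H^1`;
on the other hand every `f` in `H^1_u` satisfies `∫ |f| Δu < ∞`.

For `u = (|z|² - 1) / |z - 1| ^ β` with `0 < β < 1` both bounds hold, and `Δu` is integrable but of
order `ρ ^ (-1 - β)` on discs of radius comparable to `ρ` at distance `ρ` from `1`. Hence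
`(1 - z) ^ (-γ)` with `1 - β < γ < 1` lies in `H^1` and not in `H^1_u`.
-/

section SecondDerivative

variable {E : Type*} [NormedAddCommGroup E] [NormedSpace ℝ E] {f g : E → ℝ} {x : E}

/-- The second derivative of `f` at `x` in the direction `v`; the Laplacian on `ℂ` is its sum over
`v = 1` and `v = I`. -/
def secondDeriv (v : E) (f : E → ℝ) (x : E) : ℝ :=
  fderiv ℝ (fun y => fderiv ℝ f y v) x v

lemma contDiffAt_fderiv_apply (hf : ContDiffAt ℝ 2 f x) (v : E) :
    ContDiffAt ℝ 1 (fun y => fderiv ℝ f y v) x :=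
  (hf.fderiv_right (by norm_num)).clm_apply contDiffAt_const

lemma continuousAt_secondDeriv (hf : ContDiffAt ℝ 2 f x) (v : E) :
    ContinuousAt (secondDeriv v f) x :=
  (((contDiffAt_fderiv_apply hf v).fderiv_right (m := 0) (by norm_num)).clm_apply
    contDiffAt_const).continuousAt

lemma eventually_differentiableAt (hf : ContDiffAt ℝ 2 f x) :
    ∀ᶠ y in 𝓝 x, DifferentiableAt ℝ f y := by
  filter_upwards [hf.eventually (by simp)] with y hy
  exact hy.differentiableAt (by norm_num)

lemma fderiv_real_comp {η : ℝ → ℝ} (hη : DifferentiableAt ℝ η (f x))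
    (hf : DifferentiableAt ℝ f x) :
    fderiv ℝ (fun y => η (f y)) x = deriv η (f x) • fderiv ℝ f x :=
  (hη.hasDerivAt.comp_hasFDerivAt x hf.hasFDerivAt).fderiv

lemma secondDeriv_congr (h : f =ᶠ[𝓝 x] g) (v : E) : secondDeriv v f x = secondDeriv v g x := by
  have : (fun y => fderiv ℝ f y v) =ᶠ[𝓝 x] fun y => fderiv ℝ g y v := by
    filter_upwards [h.fderiv (𝕜 := ℝ)] with y hy
    rw [hy]
  rw [secondDeriv, secondDeriv, this.fderiv_eq]

lemma secondDeriv_mul (hf : ContDiffAt ℝ 2 f x) (hg : ContDiffAt ℝ 2 g x) (v : E) :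
    secondDeriv v (fun y => f y * g y) x = f x * secondDeriv v g x + g x * secondDeriv v f x +
      2 * (fderiv ℝ f x v * fderiv ℝ g x v) := by
  have h : (fun y => fderiv ℝ (fun w => f w * g w) y v) =ᶠ[𝓝 x]
      fun y => f y * fderiv ℝ g y v + g y * fderiv ℝ f y v := by
    filter_upwards [eventually_differentiableAt hf, eventually_differentiableAt hg] with y hfy hgy
    simp [fderiv_fun_mul hfy hgy]
  have hf' := hf.differentiableAt two_ne_zero
  have hg' := hg.differentiableAt two_ne_zero
  have hfv := (contDiffAt_fderiv_apply hf v).differentiableAt one_ne_zero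
  have hgv := (contDiffAt_fderiv_apply hg v).differentiableAt one_ne_zero
  rw [secondDeriv, h.fderiv_eq, fderiv_fun_add (hf'.fun_mul hgv) (hg'.fun_mul hfv),
    fderiv_fun_mul hf' hgv, fderiv_fun_mul hg' hfv]
  simp only [add_apply, smul_apply, smul_eq_mul, secondDeriv]
  ring

lemma secondDeriv_comp {η : ℝ → ℝ} (hη : ContDiffAt ℝ 2 η (f x)) (hf : ContDiffAt ℝ 2 f x)
    (v : E) :
    secondDeriv v (fun y => η (f y)) x =
      deriv (deriv η) (f x) * fderiv ℝ f x v ^ 2 + deriv η (f x) * secondDeriv v f x := by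
  have h : (fun y => fderiv ℝ (fun w => η (f w)) y v) =ᶠ[𝓝 x]
      fun y => deriv η (f y) * fderiv ℝ f y v := by
    filter_upwards [eventually_differentiableAt hf,
      hf.continuousAt.eventually (eventually_differentiableAt hη)] with y hfy hηy
    simp [fderiv_real_comp hηy hfy]
  have hη' : DifferentiableAt ℝ (deriv η) (f x) := by
    simpa only [fderiv_apply_one_eq_deriv] using
      (contDiffAt_fderiv_apply hη 1).differentiableAt one_ne_zero
  have hf' := hf.differentiableAt two_ne_zero
  rw [secondDeriv, h.fderiv_eq, fderiv_fun_mul (hη'.fun_comp' x hf')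
    ((contDiffAt_fderiv_apply hf v).differentiableAt one_ne_zero),
    fderiv_real_comp hη' hf']
  simp only [add_apply, smul_apply, smul_eq_mul, secondDeriv]
  ring

lemma secondDeriv_eq_zero_of_notMem_tsupport (hx : x ∉ tsupport f) (v : E) :
    secondDeriv v f x = 0 := by
  rw [secondDeriv_congr (notMem_tsupport_iff_eventuallyEq.mp hx) v]
  simp [secondDeriv, Pi.zero_def]

variable [MeasurableSpace E] [BorelSpace E] [FiniteDimensional ℝ E] {μ : Measure E}
  [μ.IsAddHaarMeasure]

lemma integral_mul_secondDeriv_comm (hf : ContDiff ℝ 2 f) (hg : ContDiff ℝ 2 g)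
    (hfc : HasCompactSupport f) (v : E) :
    ∫ x, f x * secondDeriv v g x ∂μ = ∫ x, g x * secondDeriv v f x ∂μ := by
  have hfv : ContDiff ℝ 1 fun y => fderiv ℝ f y v :=
    contDiff_iff_contDiffAt.2 fun x => contDiffAt_fderiv_apply hf.contDiffAt v
  have hgv : ContDiff ℝ 1 fun y => fderiv ℝ g y v :=
    contDiff_iff_contDiffAt.2 fun x => contDiffAt_fderiv_apply hg.contDiffAt v
  have hfvv := continuous_iff_continuousAt.2 fun x => continuousAt_secondDeriv hf.contDiffAt v
  have hgvv := continuous_iff_continuousAt.2 fun x => continuousAt_secondDeriv hg.contDiffAt v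
  have hfvc : HasCompactSupport fun y => fderiv ℝ f y v := hfc.fderiv_apply (𝕜 := ℝ) v
  have hfvvc : HasCompactSupport (secondDeriv v f) := hfvc.fderiv_apply (𝕜 := ℝ) v
  have int_fvgv := (hfv.continuous.mul hgv.continuous).integrable_of_hasCompactSupport (μ := μ)
    hfvc.mul_right
  calc ∫ x, f x * secondDeriv v g x ∂μ
      = -∫ x, fderiv ℝ f x v * fderiv ℝ g x v ∂μ :=
        integral_mul_fderiv_eq_neg_fderiv_mul_of_integrable int_fvgv
          ((hf.continuous.mul hgvv).integrable_of_hasCompactSupport hfc.mul_right)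
          ((hf.continuous.mul hgv.continuous).integrable_of_hasCompactSupport hfc.mul_right)
          (fun x _ => hf.differentiable two_ne_zero x)
          (fun x _ => hgv.differentiable one_ne_zero x)
    _ = ∫ x, secondDeriv v f x * g x ∂μ := by
        rw [integral_mul_fderiv_eq_neg_fderiv_mul_of_integrable
          ((hfvv.mul hg.continuous).integrable_of_hasCompactSupport hfvvc.mul_right) int_fvgv
          ((hfv.continuous.mul hg.continuous).integrable_of_hasCompactSupport hfvc.mul_right)
          (fun x _ => hfv.differentiable one_ne_zero x)
          (fun x _ => hg.differentiable two_ne_zero x), neg_neg]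
        rfl
    _ = ∫ x, g x * secondDeriv v f x ∂μ := by simp_rw [mul_comm]

end SecondDerivative

section Laplacian

/-- The inner product `⟪∇f, ∇g⟫` of the real gradients of `f` and `g`. -/
def gradInner (f g : ℂ → ℝ) (z : ℂ) : ℝ :=
  fderiv ℝ f z 1 * fderiv ℝ g z 1 + fderiv ℝ f z I * fderiv ℝ g z I

lemma gradInner_self_nonneg (f : ℂ → ℝ) (z : ℂ) : 0 ≤ gradInner f f z :=
  add_nonneg (mul_self_nonneg _) (mul_self_nonneg _)

variable {f g : ℂ → ℝ} {z : ℂ} {Ω : Set ℂ}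

lemma lap_congr (h : f =ᶠ[𝓝 z] g) : lap f z = lap g z :=
  congrArg₂ (· + ·) (secondDeriv_congr h 1) (secondDeriv_congr h I)

lemma lap_mul (hf : ContDiffAt ℝ 2 f z) (hg : ContDiffAt ℝ 2 g z) :
    lap (fun w => f w * g w) z = f z * lap g z + g z * lap f z + 2 * gradInner f g z := by
  change secondDeriv 1 _ z + secondDeriv I _ z = f z * (secondDeriv 1 g z + secondDeriv I g z) +
    g z * (secondDeriv 1 f z + secondDeriv I f z) + _
  rw [secondDeriv_mul hf hg, secondDeriv_mul hf hg, gradInner]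
  ring

lemma lap_comp {η : ℝ → ℝ} (hη : ContDiffAt ℝ 2 η (f z)) (hf : ContDiffAt ℝ 2 f z) :
    lap (fun w => η (f w)) z =
      deriv (deriv η) (f z) * gradInner f f z + deriv η (f z) * lap f z := by
  change secondDeriv 1 _ z + secondDeriv I _ z =
    _ + deriv η (f z) * (secondDeriv 1 f z + secondDeriv I f z)
  rw [secondDeriv_comp hη hf, secondDeriv_comp hη hf, gradInner]
  ring

lemma continuousAt_lap (hf : ContDiffAt ℝ 2 f z) : ContinuousAt (lap f) z :=
  (continuousAt_secondDeriv hf 1).add (continuousAt_secondDeriv hf I)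

lemma continuousOn_lap (hΩ : IsOpen Ω) (hf : ContDiffOn ℝ 2 f Ω) : ContinuousOn (lap f) Ω :=
  fun _ hz => (continuousAt_lap (hf.contDiffAt (hΩ.mem_nhds hz))).continuousWithinAt

lemma continuousOn_gradInner (hΩ : IsOpen Ω) (hf : ContDiffOn ℝ 2 f Ω) (hg : ContDiffOn ℝ 2 g Ω) :
    ContinuousOn (gradInner f g) Ω := fun z hz => by
  have hf' := fun v => (contDiffAt_fderiv_apply (hf.contDiffAt (hΩ.mem_nhds hz)) v).continuousAt
  have hg' := fun v => (contDiffAt_fderiv_apply (hg.contDiffAt (hΩ.mem_nhds hz)) v).continuousAt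
  exact (((hf' 1).mul (hg' 1)).add ((hf' I).mul (hg' I))).continuousWithinAt

lemma lap_eq_zero_of_notMem_tsupport (hz : z ∉ tsupport f) : lap f z = 0 :=
  (congrArg₂ (· + ·) (secondDeriv_eq_zero_of_notMem_tsupport hz 1)
    (secondDeriv_eq_zero_of_notMem_tsupport hz I)).trans (add_zero 0)

lemma integral_mul_lap_comm (hf : ContDiff ℝ 2 f) (hg : ContDiff ℝ 2 g)
    (hfc : HasCompactSupport f) : ∫ z, f z * lap g z = ∫ z, g z * lap f z := by
  have hf' (v : ℂ) : Continuous (secondDeriv v f) :=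
    continuous_iff_continuousAt.2 fun _ => continuousAt_secondDeriv hf.contDiffAt v
  have hg' (v : ℂ) : Continuous (secondDeriv v g) :=
    continuous_iff_continuousAt.2 fun _ => continuousAt_secondDeriv hg.contDiffAt v
  have hfc' (v : ℂ) : HasCompactSupport (secondDeriv v f) :=
    (hfc.fderiv_apply (𝕜 := ℝ) v).fderiv_apply (𝕜 := ℝ) v
  have int_fg (v : ℂ) : Integrable fun z => f z * secondDeriv v g z :=
    (hf.continuous.mul (hg' v)).integrable_of_hasCompactSupport hfc.mul_right
  have int_gf (v : ℂ) : Integrable fun z => g z * secondDeriv v f z :=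
    (hg.continuous.mul (hf' v)).integrable_of_hasCompactSupport (hfc' v).mul_left
  calc ∫ z, f z * lap g z
      = ∫ z, (f z * secondDeriv 1 g z + f z * secondDeriv I g z) :=
        integral_congr_ae <| .of_forall fun z => mul_add _ _ _
    _ = ∫ z, (g z * secondDeriv 1 f z + g z * secondDeriv I f z) := by
        rw [integral_add (int_fg 1) (int_fg I), integral_mul_secondDeriv_comm hf hg hfc,
          integral_mul_secondDeriv_comm hf hg hfc, ← integral_add (int_gf 1) (int_gf I)]
    _ = ∫ z, g z * lap f z := integral_congr_ae <| .of_forall fun z => (mul_add _ _ _).symm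

lemma exists_contDiff_eventuallyEq_nhdsSet {K : Set ℂ} (hΩ : IsOpen Ω) (hK : IsCompact K)
    (hKΩ : K ⊆ Ω) (hg : ContDiffOn ℝ 2 g Ω) :
    ∃ G : ℂ → ℝ, ContDiff ℝ 2 G ∧ HasCompactSupport G ∧ ∀ᶠ z in 𝓝ˢ K, G z = g z := by
  obtain ⟨L, hL, hKL, hLΩ⟩ := exists_compact_between hK hΩ hKΩ
  obtain ⟨χ, hχ_one, hχ_zero, -⟩ := exists_contMDiffMap_one_nhds_of_subset_interior
    (n := 2) (modelWithCornersSelf ℝ ℂ) hK.isClosed hKL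
  have hχ : ContDiff ℝ 2 χ := χ.contMDiff.contDiff
  have h_support : tsupport (fun z => χ z * g z) ⊆ L :=
    closure_minimal (fun z hz => by_contra fun hzL => hz (by simp [hχ_zero z hzL])) hL.isClosed
  refine ⟨fun z => χ z * g z, contDiff_iff_contDiffAt.2 fun z => ?_,
    hL.of_isClosed_subset (isClosed_tsupport _) h_support,
    hχ_one.mono fun z hz => by simp only [hz, one_mul]⟩
  by_cases hz : z ∈ L
  · exact hχ.contDiffAt.mul (hg.contDiffAt (hΩ.mem_nhds (hLΩ hz)))
  · exact contDiffAt_const.congr_of_eventuallyEq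
      (notMem_tsupport_iff_eventuallyEq.mp fun h => hz (h_support h))

lemma integral_mul_lap_comm_of_tsupport_subset (hΩ : IsOpen Ω) (hf : ContDiff ℝ 2 f)
    (hfc : HasCompactSupport f) (hfΩ : tsupport f ⊆ Ω) (hg : ContDiffOn ℝ 2 g Ω) :
    ∫ z in Ω, f z * lap g z = ∫ z in Ω, g z * lap f z := by
  obtain ⟨G, hG, -, hGg⟩ := exists_contDiff_eventuallyEq_nhdsSet hΩ hfc hfΩ hg
  have hGg' (z : ℂ) (hz : z ∈ tsupport f) : G =ᶠ[𝓝 z] g := hGg.filter_mono (nhds_le_nhdsSet hz)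
  rw [setIntegral_eq_integral_of_forall_compl_eq_zero fun z hz => by
      rw [image_eq_zero_of_notMem_tsupport fun h => hz (hfΩ h), zero_mul],
    setIntegral_eq_integral_of_forall_compl_eq_zero fun z hz => by
      rw [lap_eq_zero_of_notMem_tsupport fun h => hz (hfΩ h), mul_zero]]
  convert integral_mul_lap_comm hf hG hfc using 3 with z z
  · by_cases hz : z ∈ tsupport f
    · rw [lap_congr (hGg' z hz)]
    · rw [image_eq_zero_of_notMem_tsupport hz, zero_mul, zero_mul]
  · by_cases hz : z ∈ tsupport f
    · rw [(hGg' z hz).self_of_nhds]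
    · rw [lap_eq_zero_of_notMem_tsupport hz, mul_zero, mul_zero]

end Laplacian

section SmoothPositivePart

/-- A `C²` approximation from below of the positive part `max s 0`; it improves as `a → ∞`. -/
def smoothPos (a s : ℝ) : ℝ := ∫ t in (0 : ℝ)..s, Real.smoothTransition (a * t)

variable {a s : ℝ}

lemma deriv_smoothPos (a : ℝ) :
    deriv (smoothPos a) = fun s => Real.smoothTransition (a * s) := by
  ext s
  exact Continuous.deriv_integral _ (by fun_prop) 0 s

lemma deriv_deriv_smoothPos (a s : ℝ) :
    deriv (deriv (smoothPos a)) s = a * deriv Real.smoothTransition (a * s) := by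
  rw [deriv_smoothPos, deriv_comp_mul_left, smul_eq_mul]

lemma contDiff_smoothPos (a : ℝ) : ContDiff ℝ 2 (smoothPos a) := by
  rw [show (2 : WithTop ℕ∞) = 1 + 1 by norm_num, contDiff_succ_iff_deriv, deriv_smoothPos]
  refine ⟨fun s => ?_, by simp,
    Real.smoothTransition.contDiff.comp (contDiff_const.mul contDiff_id)⟩
  exact (Continuous.integral_hasStrictDerivAt (by fun_prop) 0 s).hasDerivAt.differentiableAt

lemma continuous_deriv_deriv_smoothPos (a : ℝ) : Continuous (deriv (deriv (smoothPos a))) := by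
  have h_cont : Continuous (deriv Real.smoothTransition) :=
    (Real.smoothTransition.contDiff (n := 1)).continuous_deriv le_rfl
  simp_rw [funext (deriv_deriv_smoothPos a)]
  exact continuous_const.mul (h_cont.comp (continuous_const.mul continuous_id))

lemma deriv_deriv_smoothPos_nonneg (ha : 0 ≤ a) (s : ℝ) : 0 ≤ deriv (deriv (smoothPos a)) s := by
  rw [deriv_deriv_smoothPos]
  exact mul_nonneg ha Real.smoothTransition.monotone.deriv_nonneg

lemma smoothPos_nonneg (hs : 0 ≤ s) : 0 ≤ smoothPos a s :=
  intervalIntegral.integral_nonneg hs fun _ _ => Real.smoothTransition.nonneg _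

lemma smoothPos_le (hs : 0 ≤ s) : smoothPos a s ≤ s := by
  have h := intervalIntegral.integral_mono_on (μ := volume) hs
    (Continuous.intervalIntegrable (u := fun t => Real.smoothTransition (a * t)) (by fun_prop) 0 s)
    intervalIntegrable_const fun t _ => Real.smoothTransition.le_one (a * t)
  simpa [smoothPos] using h

lemma smoothPos_of_nonpos (ha : 0 ≤ a) (hs : s ≤ 0) : smoothPos a s = 0 := by
  refine (intervalIntegral.integral_congr (g := fun _ => 0) fun t ht => ?_).trans
    intervalIntegral.integral_zero
  rw [uIcc_of_ge hs] at ht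
  exact Real.smoothTransition.zero_of_nonpos (mul_nonpos_of_nonneg_of_nonpos ha ht.2)

lemma deriv_smoothPos_of_nonpos (ha : 0 ≤ a) (hs : s ≤ 0) : deriv (smoothPos a) s = 0 := by
  rw [deriv_smoothPos]
  exact Real.smoothTransition.zero_of_nonpos (mul_nonpos_of_nonneg_of_nonpos ha hs)

lemma deriv_deriv_smoothPos_of_nonpos (ha : 0 ≤ a) (hs : s ≤ 0) :
    deriv (deriv (smoothPos a)) s = 0 := by
  have h_min : IsLocalMin (deriv (smoothPos a)) s := .of_forall fun t => by
    rw [deriv_smoothPos_of_nonpos ha hs, deriv_smoothPos]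
    exact Real.smoothTransition.nonneg _
  exact h_min.deriv_eq_zero

lemma norm_deriv_smoothPos_le_one (a s : ℝ) : ‖deriv (smoothPos a) s‖ ≤ 1 := by
  rw [deriv_smoothPos, Real.norm_of_nonneg (Real.smoothTransition.nonneg _)]
  exact Real.smoothTransition.le_one _

lemma tendsto_deriv_smoothPos (hs : 0 < s) :
    Tendsto (fun n : ℕ => deriv (smoothPos n) s) atTop (𝓝 1) := by
  refine tendsto_const_nhds.congr' ?_
  filter_upwards [tendsto_natCast_atTop_atTop.eventually_ge_atTop s⁻¹] with n hn
  rw [deriv_smoothPos]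
  exact (Real.smoothTransition.one_of_one_le ((inv_le_iff_one_le_mul₀ hs).1 hn)).symm

lemma tendsto_smoothPos (hs : 0 ≤ s) :
    Tendsto (fun n : ℕ => smoothPos n s) atTop (𝓝 s) := by
  have h := intervalIntegral.tendsto_integral_filter_of_dominated_convergence (μ := volume)
    (a := 0) (b := s) (f := fun _ => 1) (l := atTop)
    (F := fun (n : ℕ) t => Real.smoothTransition (n * t)) (fun _ => (1 : ℝ))
    (.of_forall fun n => by fun_prop)
    (.of_forall fun n => .of_forall fun t _ => by
      simpa [deriv_smoothPos] using norm_deriv_smoothPos_le_one n t)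
    intervalIntegrable_const
    (.of_forall fun t ht => by
      simpa [deriv_smoothPos] using tendsto_deriv_smoothPos (uIoc_of_le hs ▸ ht).1)
  simpa [smoothPos] using h

lemma hasCompactSupport_deriv_smoothTransition :
    HasCompactSupport (deriv Real.smoothTransition) := by
  refine HasCompactSupport.intro (isCompact_Icc (a := 0) (b := 1)) fun t ht => ?_
  rcases lt_or_ge t 0 with h_neg | h_nonneg
  · have h : Real.smoothTransition =ᶠ[𝓝 t] fun _ => 0 := by
      filter_upwards [Iio_mem_nhds h_neg] with y hy
      exact Real.smoothTransition.zero_of_nonpos hy.le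
    rw [h.deriv_eq, deriv_const]
  · have h : Real.smoothTransition =ᶠ[𝓝 t] fun _ => 1 := by
      filter_upwards [Ioi_mem_nhds (lt_of_not_ge fun h1 => ht ⟨h_nonneg, h1⟩)] with y hy
      exact Real.smoothTransition.one_of_one_le hy.le
    rw [h.deriv_eq, deriv_const]

lemma integral_deriv_smoothTransition : ∫ t, deriv Real.smoothTransition t = 1 := by
  have h_diff : ContDiff ℝ 1 Real.smoothTransition := Real.smoothTransition.contDiff (n := 1)
  have h_bot : Tendsto Real.smoothTransition atBot (𝓝 0) := by
    refine tendsto_const_nhds.congr' ?_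
    filter_upwards [Iic_mem_atBot 0] with t ht
    exact (Real.smoothTransition.zero_of_nonpos ht).symm
  have h_top : Tendsto Real.smoothTransition atTop (𝓝 1) := by
    refine tendsto_const_nhds.congr' ?_
    filter_upwards [Ici_mem_atTop 1] with t ht
    exact (Real.smoothTransition.one_of_one_le ht).symm
  rw [integral_of_hasDerivAt_of_tendsto
    (fun t => (h_diff.differentiable one_ne_zero t).hasDerivAt)
    ((h_diff.continuous_deriv le_rfl).integrable_of_hasCompactSupport
      hasCompactSupport_deriv_smoothTransition) h_bot h_top, sub_zero]

lemma tendsto_integral_deriv_deriv_smoothPos {g : ℝ → ℝ} {x : ℝ} (hg : Integrable g)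
    (hgx : ContinuousAt g x) :
    Tendsto (fun n : ℕ => ∫ t, deriv (deriv (smoothPos n)) (x - t) * g t) atTop (𝓝 (g x)) := by
  have h_cobounded : Tendsto
      (fun t : ℝ => ‖t‖ ^ Module.finrank ℝ ℝ * deriv Real.smoothTransition t)
      (Bornology.cobounded ℝ) (𝓝 0) := by
    refine tendsto_const_nhds.congr' ?_
    have h_bdd := hasCompactSupport_deriv_smoothTransition.isCompact.isBounded
    filter_upwards [Bornology.isBounded_def.1 h_bdd] with t ht
    rw [image_eq_zero_of_notMem_tsupport ht, mul_zero]
  have h := (tendsto_integral_comp_smul_smul_of_integrable' (μ := volume) (x₀ := x)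
    (fun t => Real.smoothTransition.monotone.deriv_nonneg) integral_deriv_smoothTransition
    h_cobounded hg hgx).comp tendsto_natCast_atTop_atTop
  simpa [Function.comp_def, deriv_deriv_smoothPos] using h

end SmoothPositivePart

section LevelMeasure

lemma contDiff_indicator {E F : Type*} [NormedAddCommGroup E] [NormedSpace ℝ E]
    [NormedAddCommGroup F] [NormedSpace ℝ F] {f : E → F} {Ω K : Set E} {n : WithTop ℕ∞}
    (hΩ : IsOpen Ω) (hK : IsClosed K) (hKΩ : K ⊆ Ω) (hf : ContDiffOn ℝ n f Ω)
    (hf₀ : ∀ x ∈ Ω \ K, f x = 0) : ContDiff ℝ n (Ω.indicator f) := by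
  refine contDiff_iff_contDiffAt.2 fun x => ?_
  by_cases hx : x ∈ Ω
  · exact (hf.contDiffAt (hΩ.mem_nhds hx)).congr_of_eventuallyEq
      (eqOn_indicator.eventuallyEq_of_mem (hΩ.mem_nhds hx))
  · refine contDiffAt_const (c := 0) |>.congr_of_eventuallyEq ?_
    filter_upwards [hK.isOpen_compl.mem_nhds fun h => hx (hKΩ h)] with y hy
    rw [indicator_apply_eq_zero]
    exact fun hyΩ => hf₀ y ⟨hyΩ, hy⟩

/-- The open sublevel set `B_u(r) = {u < r}` in `Ω`. -/
abbrev sublevel (u : ℂ → ℝ) (Ω : Set ℂ) (r : ℝ) : Set ℂ := {z | z ∈ Ω ∧ u z < r}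

/-- A `C²` approximation from below of `max (r - u) 0` on `Ω`, extended by zero. -/
def levelCutoff (u : ℂ → ℝ) (Ω : Set ℂ) (r a : ℝ) : ℂ → ℝ :=
  Ω.indicator fun z => smoothPos a (r - u z)

/-- The singular part of `4⁻¹ * lap (levelCutoff u Ω r a)`: as `a → ∞` this density concentrates on
the level set `{u = r}` and converges weakly to the Monge–Ampère measure carried by it. -/
def levelDensity (u : ℂ → ℝ) (Ω : Set ℂ) (r a : ℝ) : ℂ → ℝ :=
  Ω.indicator fun z => 4⁻¹ * (deriv (deriv (smoothPos a)) (r - u z) * gradInner u u z)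

variable {u φ : ℂ → ℝ} {Ω : Set ℂ} {r a : ℝ} {z : ℂ}

lemma isOpen_sublevel (hΩ : IsOpen Ω) (hu : ContinuousOn u Ω) : IsOpen (sublevel u Ω r) :=
  hu.isOpen_inter_preimage hΩ isOpen_Iio

lemma le_of_mem_diff_closure_sublevel (hz : z ∈ Ω \ closure (sublevel u Ω r)) : r ≤ u z :=
  not_lt.1 fun h => hz.2 (subset_closure ⟨hz.1, h⟩)

lemma integrableOn_sublevel (hK : IsCompact (closure (sublevel u Ω r)))
    (hKΩ : closure (sublevel u Ω r) ⊆ Ω) (hφ : ContinuousOn φ Ω) :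
    IntegrableOn φ (sublevel u Ω r) :=
  ((hφ.mono hKΩ).integrableOn_compact hK).mono_set subset_closure

lemma contDiff_levelCutoff (hΩ : IsOpen Ω) (hu : ContDiffOn ℝ 2 u Ω)
    (hKΩ : closure (sublevel u Ω r) ⊆ Ω) (ha : 0 ≤ a) : ContDiff ℝ 2 (levelCutoff u Ω r a) :=
  contDiff_indicator hΩ isClosed_closure hKΩ
    ((contDiff_smoothPos a).comp_contDiffOn (contDiffOn_const.sub hu)) fun _ hz =>
      smoothPos_of_nonpos ha (sub_nonpos.2 (le_of_mem_diff_closure_sublevel hz))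

lemma tsupport_levelCutoff_subset (ha : 0 ≤ a) :
    tsupport (levelCutoff u Ω r a) ⊆ closure (sublevel u Ω r) := by
  refine closure_mono fun z hz => ?_
  have hzΩ := mem_of_indicator_ne_zero hz
  refine ⟨hzΩ, not_le.1 fun h => hz ?_⟩
  rw [levelCutoff, indicator_of_mem hzΩ, smoothPos_of_nonpos ha (sub_nonpos.2 h)]

lemma lap_levelCutoff (hΩ : IsOpen Ω) (hu : ContDiffOn ℝ 2 u Ω) (hz : z ∈ Ω) :
    lap (levelCutoff u Ω r a) z =
      4 * levelDensity u Ω r a z - deriv (smoothPos a) (r - u z) * lap u z := by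
  have hη : ContDiff ℝ 2 fun s => smoothPos a (r - s) :=
    (contDiff_smoothPos a).comp (contDiff_const.sub contDiff_id)
  have hη' : deriv (fun s => smoothPos a (r - s)) = fun s => -deriv (smoothPos a) (r - s) :=
    funext fun s => deriv_comp_const_sub (smoothPos a) r s
  have hη'' (s : ℝ) : deriv (fun s => -deriv (smoothPos a) (r - s)) s =
      deriv (deriv (smoothPos a)) (r - s) := by
    rw [deriv.fun_neg, deriv_comp_const_sub, neg_neg]
  rw [levelCutoff, lap_congr (eqOn_indicator.eventuallyEq_of_mem (hΩ.mem_nhds hz)),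
    lap_comp (η := fun s => smoothPos a (r - s)) hη.contDiffAt (hu.contDiffAt (hΩ.mem_nhds hz)),
    hη', hη'', levelDensity, indicator_of_mem hz]
  ring

lemma levelDensity_nonneg (ha : 0 ≤ a) (z : ℂ) : 0 ≤ levelDensity u Ω r a z :=
  indicator_nonneg (fun z _ => mul_nonneg (by norm_num)
    (mul_nonneg (deriv_deriv_smoothPos_nonneg ha _) (gradInner_self_nonneg u z))) z

lemma levelDensity_eq_zero (ha : 0 ≤ a) (hz : z ∉ sublevel u Ω r) :
    levelDensity u Ω r a z = 0 := by
  refine indicator_apply_eq_zero.2 fun hzΩ => ?_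
  rw [deriv_deriv_smoothPos_of_nonpos ha (sub_nonpos.2 (not_lt.1 fun h => hz ⟨hzΩ, h⟩)), zero_mul,
    mul_zero]

lemma continuous_levelDensity (hΩ : IsOpen Ω) (hu : ContDiffOn ℝ 2 u Ω)
    (hKΩ : closure (sublevel u Ω r) ⊆ Ω) (ha : 0 ≤ a) : Continuous (levelDensity u Ω r a) := by
  refine contDiff_zero.1 (contDiff_indicator hΩ isClosed_closure hKΩ (contDiffOn_zero.2 ?_)
    fun z hz => ?_)
  · exact continuousOn_const.mul (((continuous_deriv_deriv_smoothPos a).comp_continuousOn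
      (continuousOn_const.sub hu.continuousOn)).mul (continuousOn_gradInner hΩ hu hu))
  · rw [← indicator_of_mem hz.1 fun z => _ * _]
    exact levelDensity_eq_zero ha fun h => hz.2 (subset_closure h)

lemma setIntegral_levelCutoff_mul_lap (hΩ : IsOpen Ω) (hu : ContDiffOn ℝ 2 u Ω)
    (hK : IsCompact (closure (sublevel u Ω r))) (hKΩ : closure (sublevel u Ω r) ⊆ Ω)
    (ha : 0 ≤ a) (hφ : ContDiffOn ℝ 2 φ Ω) :
    ∫ z in sublevel u Ω r, smoothPos a (r - u z) * lap φ z = ∫ z in sublevel u Ω r,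
      (4 * (φ z * levelDensity u Ω r a z) - deriv (smoothPos a) (r - u z) * (φ z * lap u z)) := by
  have h_open : IsOpen (sublevel u Ω r) := isOpen_sublevel hΩ hu.continuousOn
  have h_lap (z : ℂ) (hz : z ∈ Ω) : φ z * lap (levelCutoff u Ω r a) z =
      4 * (φ z * levelDensity u Ω r a z) - deriv (smoothPos a) (r - u z) * (φ z * lap u z) := by
    rw [lap_levelCutoff hΩ hu hz]
    ring
  have h_le (z : ℂ) (hz : z ∈ Ω \ sublevel u Ω r) : r - u z ≤ 0 :=
    sub_nonpos.2 (not_lt.1 fun h => hz.2 ⟨hz.1, h⟩)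
  calc ∫ z in sublevel u Ω r, smoothPos a (r - u z) * lap φ z
      = ∫ z in sublevel u Ω r, levelCutoff u Ω r a z * lap φ z :=
        setIntegral_congr_fun h_open.measurableSet fun z hz => by
          rw [levelCutoff, indicator_of_mem hz.1]
    _ = ∫ z in Ω, levelCutoff u Ω r a z * lap φ z :=
        (setIntegral_eq_of_subset_of_forall_sdiff_eq_zero hΩ.measurableSet (fun z hz => hz.1)
          fun z hz => by
            rw [levelCutoff, indicator_of_mem hz.1, smoothPos_of_nonpos ha (h_le z hz),
              zero_mul]).symm
    _ = ∫ z in Ω, φ z * lap (levelCutoff u Ω r a) z :=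
        integral_mul_lap_comm_of_tsupport_subset hΩ (contDiff_levelCutoff hΩ hu hKΩ ha)
          (hK.of_isClosed_subset (isClosed_tsupport _) (tsupport_levelCutoff_subset ha))
          ((tsupport_levelCutoff_subset ha).trans hKΩ) hφ
    _ = ∫ z in sublevel u Ω r, φ z * lap (levelCutoff u Ω r a) z :=
        setIntegral_eq_of_subset_of_forall_sdiff_eq_zero hΩ.measurableSet (fun z hz => hz.1)
          fun z hz => by
            rw [h_lap z hz.1, levelDensity_eq_zero ha hz.2,
              deriv_smoothPos_of_nonpos ha (h_le z hz)]
            ring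
    _ = _ := setIntegral_congr_fun h_open.measurableSet fun z hz => h_lap z hz.1

lemma integral_mul_levelDensity (hΩ : IsOpen Ω) (hu : ContDiffOn ℝ 2 u Ω)
    (hK : IsCompact (closure (sublevel u Ω r))) (hKΩ : closure (sublevel u Ω r) ⊆ Ω)
    (ha : 0 ≤ a) (hφ : ContDiffOn ℝ 2 φ Ω) :
    ∫ z, φ z * levelDensity u Ω r a z = 4⁻¹ * ∫ z in sublevel u Ω r,
      (smoothPos a (r - u z) * lap φ z + deriv (smoothPos a) (r - u z) * (φ z * lap u z)) := by
  have h_diff : ContinuousOn (fun z => r - u z) Ω := continuousOn_const.sub hu.continuousOn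
  have h_cut : IntegrableOn (fun z => smoothPos a (r - u z) * lap φ z) (sublevel u Ω r) :=
    integrableOn_sublevel hK hKΩ
      (((contDiff_smoothPos a).continuous.comp_continuousOn h_diff).mul (continuousOn_lap hΩ hφ))
  have h_deriv : IntegrableOn (fun z => deriv (smoothPos a) (r - u z) * (φ z * lap u z))
      (sublevel u Ω r) :=
    integrableOn_sublevel hK hKΩ
      ((((contDiff_smoothPos a).continuous_deriv (by norm_num)).comp_continuousOn h_diff).mul
        (hφ.continuousOn.mul (continuousOn_lap hΩ hu)))
  have h_density : IntegrableOn (fun z => φ z * levelDensity u Ω r a z) (sublevel u Ω r) :=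
    integrableOn_sublevel hK hKΩ
      (hφ.continuousOn.mul (continuous_levelDensity hΩ hu hKΩ ha).continuousOn)
  rw [integral_add h_cut h_deriv, setIntegral_levelCutoff_mul_lap hΩ hu hK hKΩ ha hφ,
    integral_sub (h_density.const_mul 4) h_deriv, sub_add_cancel, integral_const_mul,
    inv_mul_cancel_left₀ (by norm_num)]
  exact (setIntegral_eq_integral_of_forall_compl_eq_zero fun z hz => by
    rw [levelDensity_eq_zero ha hz, mul_zero]).symm

lemma tendsto_integral_mul_levelDensity (hΩ : IsOpen Ω) (hu : ContDiffOn ℝ 2 u Ω)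
    (hK : IsCompact (closure (sublevel u Ω r))) (hKΩ : closure (sublevel u Ω r) ⊆ Ω)
    (hφ : ContDiffOn ℝ 2 φ Ω) :
    Tendsto (fun n : ℕ => ∫ z, φ z * levelDensity u Ω r n z) atTop
      (𝓝 (4⁻¹ * ∫ z in sublevel u Ω r, ((r - u z) * lap φ z + φ z * lap u z))) := by
  have h_open : IsOpen (sublevel u Ω r) := isOpen_sublevel hΩ hu.continuousOn
  have h_diff : ContinuousOn (fun z => r - u z) Ω := continuousOn_const.sub hu.continuousOn
  have h_lapφ := continuousOn_lap hΩ hφ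
  have h_lapu := hφ.continuousOn.mul (continuousOn_lap hΩ hu)
  simp_rw [fun n : ℕ => integral_mul_levelDensity hΩ hu hK hKΩ n.cast_nonneg hφ]
  refine (tendsto_integral_of_dominated_convergence
    (fun z => |r - u z| * |lap φ z| + |φ z * lap u z|) (fun n => ?_)
    (integrableOn_sublevel hK hKΩ ((h_diff.abs.mul h_lapφ.abs).add h_lapu.abs))
    (fun n => ?_) ?_).const_mul _
  · exact (integrableOn_sublevel hK hKΩ
      ((((contDiff_smoothPos n).continuous.comp_continuousOn h_diff).mul h_lapφ).add
      ((((contDiff_smoothPos n).continuous_deriv (by norm_num)).comp_continuousOn h_diff).mul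
        h_lapu))).aestronglyMeasurable
  · filter_upwards [ae_restrict_mem h_open.measurableSet] with z hz
    have h_pos : 0 ≤ r - u z := sub_nonneg.2 hz.2.le
    refine (norm_add_le _ _).trans (add_le_add ?_ ?_)
    · rw [norm_mul, Real.norm_of_nonneg (smoothPos_nonneg h_pos), abs_of_nonneg h_pos]
      exact mul_le_mul_of_nonneg_right (smoothPos_le h_pos) (abs_nonneg _)
    · rw [norm_mul]
      exact mul_le_of_le_one_left (norm_nonneg _) (norm_deriv_smoothPos_le_one _ _)
  · filter_upwards [ae_restrict_mem h_open.measurableSet] with z hz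
    have h_pos : 0 < r - u z := sub_pos.2 hz.2
    simpa only [one_mul] using ((tendsto_smoothPos h_pos.le).mul_const (lap φ z)).add
      ((tendsto_deriv_smoothPos h_pos).mul_const (φ z * lap u z))

end LevelMeasure

section LevelMeasureExistence

lemma exists_finiteMeasure_integral_eq_of_tendsto {E : Type*} [TopologicalSpace E] [T2Space E]
    [MeasurableSpace E] [BorelSpace E] {K : Set E} (hK : IsCompact K) {μ : ℕ → FiniteMeasure E}
    {C : NNReal} (hC : ∀ n, (μ n).mass ≤ C) (hμK : ∀ n, μ n Kᶜ = 0) :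
    ∃ σ : FiniteMeasure E, σ Kᶜ = 0 ∧ ∀ (g : BoundedContinuousFunction E ℝ) (L : ℝ),
      Tendsto (fun n => ∫ x, g x ∂(μ n : Measure E)) atTop (𝓝 L) →
        ∫ x, g x ∂(σ : Measure E) = L := by
  obtain ⟨σ, hσ, h_le⟩ :=
    (isCompact_setOfPred_finiteMeasure_le_of_isCompact C hK).ultrafilter_le_nhds'
      (Ultrafilter.map μ (hyperfilter ℕ))
      (Ultrafilter.mem_map.2 (Eventually.of_forall fun n => ⟨hC n, hμK n⟩))
  refine ⟨σ, hσ.2, fun g L hL => tendsto_nhds_unique ?_ (hL.mono_left Nat.hyperfilter_le_atTop)⟩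
  exact FiniteMeasure.tendsto_iff_forall_integral_tendsto.1 h_le g

/-- `σ` is the Monge–Ampère measure `μ_{u,r}` of a `C²` function `u`, characterized as a measure on
the closure of `{u < r}` by the Lelong–Jensen formula. -/
structure IsLevelMeasure (u : ℂ → ℝ) (Ω : Set ℂ) (r : ℝ) (σ : Measure ℂ) : Prop where
  finite : IsFiniteMeasure σ
  compl_closure : σ (closure (sublevel u Ω r))ᶜ = 0
  lelong_jensen : ∀ φ : ℂ → ℝ, ContDiffOn ℝ 2 φ Ω →
    ∫ z, φ z ∂σ = 4⁻¹ * ∫ z in sublevel u Ω r, ((r - u z) * lap φ z + φ z * lap u z)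

variable {u : ℂ → ℝ} {Ω : Set ℂ} {r : ℝ}

lemma integral_withDensity_ofReal {E : Type*} [MeasurableSpace E] {μ : Measure E} {ρ : E → ℝ}
    (hρ : AEMeasurable ρ μ) (hρ₀ : 0 ≤ᵐ[μ] ρ) (φ : E → ℝ) :
    ∫ z, φ z ∂μ.withDensity (fun z => ENNReal.ofReal (ρ z)) = ∫ z, φ z * ρ z ∂μ := by
  rw [integral_withDensity_eq_integral_toReal_smul₀ hρ.ennreal_ofReal
    (.of_forall fun _ => ENNReal.ofReal_lt_top)]
  refine integral_congr_ae ?_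
  filter_upwards [hρ₀] with z hz
  rw [ENNReal.toReal_ofReal hz, smul_eq_mul, mul_comm]

lemma exists_finiteMeasure_integral_levelDensity (hΩ : IsOpen Ω) (hu : ContDiffOn ℝ 2 u Ω)
    (hK : IsCompact (closure (sublevel u Ω r))) (hKΩ : closure (sublevel u Ω r) ⊆ Ω) {a : ℝ}
    (ha : 0 ≤ a) :
    ∃ μ : FiniteMeasure ℂ, μ (closure (sublevel u Ω r))ᶜ = 0 ∧
      ∀ φ : ℂ → ℝ, ∫ z, φ z ∂(μ : Measure ℂ) = ∫ z, φ z * levelDensity u Ω r a z := by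
  have h_cont := continuous_levelDensity hΩ hu hKΩ ha
  have h_zero (z : ℂ) (hz : z ∉ closure (sublevel u Ω r)) : levelDensity u Ω r a z = 0 :=
    levelDensity_eq_zero ha fun h => hz (subset_closure h)
  have h_finite := isFiniteMeasure_withDensity_ofReal (μ := volume)
    (h_cont.integrable_of_hasCompactSupport (HasCompactSupport.intro hK h_zero)).2
  let μ : FiniteMeasure ℂ :=
    ⟨volume.withDensity fun z => ENNReal.ofReal (levelDensity u Ω r a z), h_finite⟩
  refine ⟨μ, (μ.null_iff_toMeasure_null _).2 ?_,
    integral_withDensity_ofReal h_cont.aemeasurable (.of_forall (levelDensity_nonneg ha))⟩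
  rw [FiniteMeasure.toMeasure_mk, withDensity_apply _ hK.measurableSet.compl]
  refine setLIntegral_eq_zero hK.measurableSet.compl fun z hz => ?_
  simp only [h_zero z hz, ENNReal.ofReal_zero, Pi.zero_apply]

theorem exists_isLevelMeasure (hΩ : IsOpen Ω) (hu : ContDiffOn ℝ 2 u Ω)
    (hK : IsCompact (closure (sublevel u Ω r))) (hKΩ : closure (sublevel u Ω r) ⊆ Ω) :
    ∃ σ : Measure ℂ, IsLevelMeasure u Ω r σ := by
  choose μ hμK hμ using fun n : ℕ =>
    exists_finiteMeasure_integral_levelDensity hΩ hu hK hKΩ n.cast_nonneg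
  have h_tendsto (φ : ℂ → ℝ) (hφ : ContDiffOn ℝ 2 φ Ω) :
      Tendsto (fun n => ∫ z, φ z ∂(μ n : Measure ℂ)) atTop
        (𝓝 (4⁻¹ * ∫ z in sublevel u Ω r, ((r - u z) * lap φ z + φ z * lap u z))) := by
    simp_rw [hμ]
    exact tendsto_integral_mul_levelDensity hΩ hu hK hKΩ hφ
  obtain ⟨C, hC⟩ := (h_tendsto (fun _ => 1) contDiffOn_const).bddAbove_range
  have h_mass (n : ℕ) : (μ n).mass ≤ C.toNNReal := by
    refine NNReal.le_toNNReal_of_coe_le (hC ⟨n, ?_⟩)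
    simp only [integral_const, smul_eq_mul, mul_one]
    rfl
  obtain ⟨σ, hσK, hσ⟩ := exists_finiteMeasure_integral_eq_of_tendsto hK h_mass hμK
  refine ⟨σ, inferInstance, (σ.null_iff_toMeasure_null _).1 hσK, fun φ hφ => ?_⟩
  obtain ⟨G, hG, hGc, hGφ⟩ := exists_contDiff_eventuallyEq_nhdsSet hΩ hK hKΩ hφ
  have h_eq (τ : FiniteMeasure ℂ) (hτ : τ (closure (sublevel u Ω r))ᶜ = 0) :
      ∫ z, φ z ∂(τ : Measure ℂ) = ∫ z, G z ∂(τ : Measure ℂ) := by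
    refine integral_congr_ae ?_
    filter_upwards [mem_ae_iff.2 ((τ.null_iff_toMeasure_null _).1 hτ)] with z hz
    exact (hGφ.self_of_nhdsSet z hz).symm
  obtain ⟨M, hM⟩ := hGc.exists_bound_of_continuous hG.continuous
  rw [h_eq σ hσK]
  refine hσ (.ofNormedAddCommGroup G hG.continuous M hM) _ ((h_tendsto φ hφ).congr fun n => ?_)
  exact h_eq (μ n) (hμK n)

end LevelMeasureExistence

section MongeAmpere

/-- The Riesz measure `dd^c u` of a `C²` subharmonic function: the density `4⁻¹ * lap u` on `Ω`. -/
def laplacianMeasure (u : ℂ → ℝ) (Ω : Set ℂ) : Measure ℂ :=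
  (volume.restrict Ω).withDensity fun z => ENNReal.ofReal (4⁻¹ * lap u z)

variable {u φ : ℂ → ℝ} {Ω B : Set ℂ} {r : ℝ} {σ : Measure ℂ}

lemma restrict_laplacianMeasure (hB : MeasurableSet B) (hBΩ : B ⊆ Ω) :
    (laplacianMeasure u Ω).restrict B = laplacianMeasure u B := by
  rw [laplacianMeasure, restrict_withDensity hB, Measure.restrict_restrict_of_subset hBΩ,
    laplacianMeasure]

lemma laplacianMeasure_compl (hΩ : MeasurableSet Ω) : laplacianMeasure u Ω Ωᶜ = 0 :=
  withDensity_absolutelyContinuous _ _ (by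
    rw [Measure.restrict_apply hΩ.compl, compl_inter_self, measure_empty])

lemma integral_laplacianMeasure (hΩ : IsOpen Ω) (hu : ContDiffOn ℝ 2 u Ω)
    (hu₀ : ∀ z ∈ Ω, 0 ≤ lap u z) (hB : MeasurableSet B) (hBΩ : B ⊆ Ω) (φ : ℂ → ℝ) :
    ∫ z, φ z ∂laplacianMeasure u B = 4⁻¹ * ∫ z in B, φ z * lap u z := by
  have h_cont : ContinuousOn (fun z => 4⁻¹ * lap u z) B :=
    continuousOn_const.mul ((continuousOn_lap hΩ hu).mono hBΩ)
  rw [laplacianMeasure, integral_withDensity_ofReal (h_cont.aemeasurable hB)]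
  · simp_rw [mul_left_comm _ (4⁻¹ : ℝ)]
    exact integral_const_mul _ _
  · filter_upwards [ae_restrict_mem hB] with z hz
    exact mul_nonneg (by norm_num) (hu₀ z (hBΩ hz))

lemma integrable_mul_lap_of_tsupport_subset (hΩ : IsOpen Ω) (hu : ContDiffOn ℝ 2 u Ω)
    (hφ : Continuous φ) (hφc : HasCompactSupport φ) (hφΩ : tsupport φ ⊆ Ω) :
    Integrable fun z => φ z * lap u z :=
  (integrableOn_iff_integrable_of_support_subset fun _ hz =>
    subset_tsupport φ (left_ne_zero_of_mul hz)).1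
    ((hφ.continuousOn.mul ((continuousOn_lap hΩ hu).mono hφΩ)).integrableOn_compact hφc)

lemma integrable_mul_lap_of_contDiff {v : ℂ → ℝ} (hv : ContinuousOn v Ω) (hφ : ContDiff ℝ 2 φ)
    (hφc : HasCompactSupport φ) (hφΩ : tsupport φ ⊆ Ω) : Integrable fun z => v z * lap φ z :=
  (integrableOn_iff_integrable_of_support_subset fun z hz => not_not.1 fun h =>
    right_ne_zero_of_mul (a := v z) hz (lap_eq_zero_of_notMem_tsupport h)).1
    (((hv.mono hφΩ).mul (continuousOn_lap isOpen_univ hφ.contDiffOn |>.mono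
      (subset_univ _))).integrableOn_compact hφc)

lemma isRieszMeasure_laplacianMeasure (hΩ : IsOpen Ω) (hu : ContDiffOn ℝ 2 u Ω)
    (hu₀ : ∀ z ∈ Ω, 0 ≤ lap u z) : IsRieszMeasure u Ω (laplacianMeasure u Ω) := by
  refine ⟨laplacianMeasure_compl hΩ.measurableSet, fun φ hφ hφc hφΩ => ?_⟩
  rw [integral_laplacianMeasure hΩ hu hu₀ hΩ.measurableSet subset_rfl,
    integral_mul_lap_comm_of_tsupport_subset hΩ hφ hφc hφΩ hu]

lemma setIntegral_max_mul_lap (hΩ : IsOpen Ω) (hu : ContDiffOn ℝ 2 u Ω) (hφ : ContDiff ℝ 2 φ)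
    (hφc : HasCompactSupport φ) (hφΩ : tsupport φ ⊆ Ω) :
    ∫ z in Ω, max (u z) r * lap φ z =
      (∫ z in sublevel u Ω r, (r - u z) * lap φ z) + ∫ z in Ω, φ z * lap u z := by
  have h_open : IsOpen (sublevel u Ω r) := isOpen_sublevel hΩ hu.continuousOn
  have h_sub : sublevel u Ω r ⊆ Ω := fun z hz => hz.1
  have h_max (z : ℂ) (hz : z ∈ Ω) : max (u z) r * lap φ z =
      (sublevel u Ω r).indicator (fun z => (r - u z) * lap φ z) z + u z * lap φ z := by
    by_cases h : u z < r
    · rw [indicator_of_mem (show z ∈ sublevel u Ω r from ⟨hz, h⟩), max_eq_right h.le]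
      ring
    · rw [indicator_of_notMem fun hz' => h hz'.2, max_eq_left (not_lt.1 h), zero_add]
  have h_diff : ContinuousOn (fun z => r - u z) Ω := continuousOn_const.sub hu.continuousOn
  rw [setIntegral_congr_fun hΩ.measurableSet h_max,
    integral_add ((integrable_mul_lap_of_contDiff h_diff hφ hφc hφΩ).indicator
      h_open.measurableSet).integrableOn
      (integrable_mul_lap_of_contDiff hu.continuousOn hφ hφc hφΩ).integrableOn,
    setIntegral_indicator h_open.measurableSet, inter_eq_self_of_subset_right h_sub,
    integral_mul_lap_comm_of_tsupport_subset hΩ hφ hφc hφΩ hu]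

lemma IsLevelMeasure.measure_compl (hσ : IsLevelMeasure u Ω r σ)
    (hKΩ : closure (sublevel u Ω r) ⊆ Ω) : σ Ωᶜ = 0 :=
  measure_mono_null (compl_subset_compl.2 hKΩ) hσ.compl_closure

theorem IsLevelMeasure.isMAMeasure (hσ : IsLevelMeasure u Ω r σ) (hΩ : IsOpen Ω)
    (hu : ContDiffOn ℝ 2 u Ω) (hu₀ : ∀ z ∈ Ω, 0 ≤ lap u z)
    (hKΩ : closure (sublevel u Ω r) ⊆ Ω) [IsFiniteMeasure (laplacianMeasure u Ω)] :
    IsMAMeasure u Ω (laplacianMeasure u Ω) r σ := by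
  have := hσ.finite
  have h_open : IsOpen (sublevel u Ω r) := isOpen_sublevel hΩ hu.continuousOn
  have h_diff : {z | z ∈ Ω ∧ r ≤ u z} = Ω \ sublevel u Ω r := by
    ext z
    simp +contextual [sublevel]
  have h_meas : MeasurableSet {z | z ∈ Ω ∧ r ≤ u z} :=
    h_diff ▸ hΩ.measurableSet.diff h_open.measurableSet
  have h_sub : {z | z ∈ Ω ∧ r ≤ u z} ⊆ Ω := fun z hz => hz.1
  refine ⟨σ + (laplacianMeasure u Ω).restrict {z | z ∈ Ω ∧ r ≤ u z}, ⟨?_, fun φ hφ hφc hφΩ => ?_⟩,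
    Measure.add_sub_cancel.symm⟩
  · rw [Measure.add_apply, hσ.measure_compl hKΩ, zero_add]
    exact Measure.absolutelyContinuous_of_le Measure.restrict_le_self
      (laplacianMeasure_compl hΩ.measurableSet)
  have int_lapu : Integrable fun z => φ z * lap u z :=
    integrable_mul_lap_of_tsupport_subset hΩ hu hφ.continuous hφc hφΩ
  have int_lapφ := integrable_mul_lap_of_contDiff (v := fun z => r - u z)
    (continuousOn_const.sub hu.continuousOn) hφ hφc hφΩ
  obtain ⟨C, hC⟩ := hφc.exists_bound_of_continuous hφ.continuous
  have int_φ (μ : Measure ℂ) [IsFiniteMeasure μ] : Integrable φ μ :=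
    .of_bound hφ.continuous.aestronglyMeasurable C (.of_forall hC)
  calc ∫ z, φ z ∂(σ + (laplacianMeasure u Ω).restrict {z | z ∈ Ω ∧ r ≤ u z})
      = 4⁻¹ * (∫ z in sublevel u Ω r, ((r - u z) * lap φ z + φ z * lap u z)) +
          4⁻¹ * ∫ z in {z | z ∈ Ω ∧ r ≤ u z}, φ z * lap u z := by
        rw [integral_add_measure (int_φ _) (int_φ _), hσ.lelong_jensen φ hφ.contDiffOn,
          restrict_laplacianMeasure h_meas h_sub,
          integral_laplacianMeasure hΩ hu hu₀ h_meas h_sub]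
    _ = 4⁻¹ * ((∫ z in sublevel u Ω r, (r - u z) * lap φ z) + ∫ z in Ω, φ z * lap u z) := by
        rw [integral_add int_lapφ.integrableOn int_lapu.integrableOn, h_diff, ← mul_add, add_assoc,
          add_comm (∫ z in sublevel u Ω r, φ z * lap u z),
          setIntegral_sdiff h_open.measurableSet int_lapu.integrableOn fun z hz => hz.1,
          sub_add_cancel]
    _ = 4⁻¹ * ∫ z in Ω, max (u z) r * lap φ z := by
        rw [setIntegral_max_mul_lap hΩ hu hφ hφc hφΩ]

end MongeAmpere

section PolarCoordinates

variable {f φ : ℂ → ℝ} {g : ℝ → ℝ}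

lemma setIntegral_Ioo_polarCoord_symm (f : ℂ → ℝ) (ρ : ℝ) :
    ∫ θ in Ioo (-π) π, f (Complex.polarCoord.symm (ρ, θ)) = 2 * π * Real.circleAverage f 0 ρ := by
  rw [Real.circleAverage_eq_integral_add (-π),
    intervalIntegral.integral_comp_add_right (fun θ => f (circleMap 0 ρ θ)), smul_eq_mul,
    mul_inv_cancel_left₀ (by positivity), zero_add, two_mul, add_neg_cancel_right,
    intervalIntegral.integral_of_le (by linarith [Real.pi_pos]), ← integral_Ioc_eq_integral_Ioo]
  simp_rw [circleMap_zero, exp_mul_I, Complex.polarCoord_symm_apply, ofReal_cos, ofReal_sin]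

lemma integrableOn_comp_polarCoord_symm (hf : Measurable f) (hfi : Integrable f) :
    IntegrableOn (fun p : ℝ × ℝ => p.1 * f (Complex.polarCoord.symm p)) polarCoord.target := by
  have h_symm : Measurable Complex.polarCoord.symm := by
    simp_rw [funext Complex.polarCoord_symm_apply]
    fun_prop
  refine ⟨(measurable_fst.mul (hf.comp h_symm)).aestronglyMeasurable, ?_⟩
  refine lt_of_eq_of_lt ?_ hfi.2
  rw [← Complex.lintegral_comp_polarCoord_symm]
  refine setLIntegral_congr_fun polarCoord.open_target.measurableSet fun p hp => ?_
  rw [enorm_mul, Real.enorm_of_nonneg (le_of_lt hp.1), smul_eq_mul]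

lemma integral_eq_integral_Ioi_circleAverage (hf : Measurable f) (hfi : Integrable f) :
    ∫ z, f z = ∫ ρ in Ioi (0 : ℝ), 2 * π * ρ * Real.circleAverage f 0 ρ := by
  have h_int := integrableOn_comp_polarCoord_symm hf hfi
  rw [← Complex.integral_comp_polarCoord_symm]
  simp_rw [smul_eq_mul]
  rw [polarCoord_target, Measure.volume_eq_prod, setIntegral_prod _ h_int]
  refine setIntegral_congr_fun measurableSet_Ioi fun ρ _ => ?_
  simp only [integral_const_mul, setIntegral_Ioo_polarCoord_symm]
  ring

lemma integral_comp_norm_sub_sq_mul (c : ℂ) (hg : Measurable g) (hφ : Measurable φ)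
    (hi : Integrable fun z => g (‖z - c‖ ^ 2) * φ z) :
    ∫ z, g (‖z - c‖ ^ 2) * φ z = π * ∫ t in Ioi (0 : ℝ), g t * Real.circleAverage φ c √t := by
  have hi' : Integrable fun z => g (‖z‖ ^ 2) * φ (z + c) := by
    simpa only [add_sub_cancel_right] using hi.comp_add_right c
  have h_avg (ρ : ℝ) : Real.circleAverage (fun z => g (‖z‖ ^ 2) * φ (z + c)) 0 ρ =
      g (ρ ^ 2) * Real.circleAverage φ c ρ := by
    rw [← Real.circleAverage_map_add_const (c := c), ← smul_eq_mul, ← Real.circleAverage_fun_smul]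
    refine Real.circleAverage_congr_sphere fun z hz => ?_
    rw [mem_sphere_zero_iff_norm.1 hz, sq_abs, smul_eq_mul]
  calc ∫ z, g (‖z - c‖ ^ 2) * φ z
      = ∫ z, g (‖z‖ ^ 2) * φ (z + c) := by
        rw [← integral_add_right_eq_self _ c]
        simp only [add_sub_cancel_right]
    _ = ∫ ρ in Ioi (0 : ℝ), 2 * π * ρ * (g (ρ ^ 2) * Real.circleAverage φ c ρ) := by
        rw [integral_eq_integral_Ioi_circleAverage (by fun_prop) hi']
        simp_rw [h_avg]
    _ = ∫ ρ in Ioi (0 : ℝ), (2 * ρ ^ ((2 : ℝ) - 1)) •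
          (π * (g (ρ ^ (2 : ℝ)) * Real.circleAverage φ c √(ρ ^ (2 : ℝ)))) := by
        refine setIntegral_congr_fun measurableSet_Ioi fun ρ hρ => ?_
        norm_num [Real.sqrt_sq (le_of_lt hρ)]
        ring
    _ = π * ∫ t in Ioi (0 : ℝ), g t * Real.circleAverage φ c √t := by
        rw [integral_comp_rpow_Ioi_of_pos (g := fun t => π * (g t * Real.circleAverage φ c √t))
          two_pos, integral_const_mul]

lemma setIntegral_ball_eq_intervalIntegral (hφ : Continuous φ) (c : ℂ) {R : ℝ} (hR : 0 ≤ R) :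
    ∫ z in ball c R, φ z = π * ∫ t in 0..R ^ 2, Real.circleAverage φ c √t := by
  have h_ball (z : ℂ) : (ball c R).indicator φ z =
      (Iio (R ^ 2)).indicator 1 (‖z - c‖ ^ 2) * φ z := by
    simp only [indicator, mem_ball, dist_eq, mem_Iio, sq_lt_sq₀ (norm_nonneg _) hR, Pi.one_apply,
      ite_mul, one_mul, zero_mul]
  have h_int : IntegrableOn φ (ball c R) :=
    (hφ.continuousOn.integrableOn_compact (isCompact_closedBall c R)).mono_set
      ball_subset_closedBall
  rw [← integral_indicator measurableSet_ball]
  simp_rw [h_ball]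
  rw [integral_comp_norm_sub_sq_mul c (measurable_one.indicator measurableSet_Iio) hφ.measurable
    ((h_int.integrable_indicator measurableSet_ball).congr (.of_forall h_ball)),
    intervalIntegral.integral_of_le (sq_nonneg R), integral_Ioc_eq_integral_Ioo, ← Ioi_inter_Iio,
    ← setIntegral_indicator measurableSet_Iio]
  simp only [indicator, Pi.one_apply, ite_mul, one_mul, zero_mul]

end PolarCoordinates

section Disc

variable {φ : ℂ → ℝ} {Ω : Set ℂ} {c : ℂ} {R : ℝ}

lemma contDiff_norm_sub_sq (c : ℂ) : ContDiff ℝ 2 fun z : ℂ => ‖z - c‖ ^ 2 :=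
  (contDiff_id.sub contDiff_const).norm_sq ℝ

lemma fderiv_norm_sub_sq (c z v : ℂ) :
    fderiv ℝ (fun z => ‖z - c‖ ^ 2) z v = 2 * (z.re - c.re) * v.re + 2 * (z.im - c.im) * v.im := by
  have h : HasFDerivAt (fun z => ‖z - c‖ ^ 2) (2 • innerSL ℝ (z - c)) z :=
    ((hasFDerivAt_id z).sub_const c).norm_sq
  rw [h.fderiv]
  simp [Complex.inner]
  ring

lemma lap_norm_sub_sq (c z : ℂ) : lap (fun z => ‖z - c‖ ^ 2) z = 4 := by
  simp only [lap, fderiv_norm_sub_sq, one_re, one_im, I_re, I_im, mul_one, mul_zero, add_zero,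
    zero_add]
  have h_re : HasFDerivAt (fun w : ℂ => 2 * (w.re - c.re)) ((2 : ℝ) • reCLM) z :=
    (reCLM.hasFDerivAt.sub_const c.re).const_mul 2
  have h_im : HasFDerivAt (fun w : ℂ => 2 * (w.im - c.im)) ((2 : ℝ) • imCLM) z :=
    (imCLM.hasFDerivAt.sub_const c.im).const_mul 2
  rw [h_re.fderiv, h_im.fderiv]
  norm_num

lemma gradInner_norm_sub_sq (c z : ℂ) :
    gradInner (fun z => ‖z - c‖ ^ 2) (fun z => ‖z - c‖ ^ 2) z = 4 * ‖z - c‖ ^ 2 := by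
  simp only [gradInner, fderiv_norm_sub_sq, one_re, one_im, I_re, I_im]
  rw [← normSq_eq_norm_sq, normSq_apply, sub_re, sub_im]
  ring

lemma sublevel_norm_sub_sq (hR : 0 ≤ R) :
    sublevel (fun z => ‖z - c‖ ^ 2) univ (R ^ 2) = ball c R := by
  ext z
  simp only [mem_ofPred_eq, mem_univ, true_and, mem_ball, dist_eq, sq_lt_sq₀ (norm_nonneg _) hR]

lemma levelDensity_norm_sub_sq (n : ℕ) (z : ℂ) :
    levelDensity (fun z => ‖z - c‖ ^ 2) univ (R ^ 2) n z =
      deriv (deriv (smoothPos n)) (R ^ 2 - ‖z - c‖ ^ 2) * ‖z - c‖ ^ 2 := by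
  rw [levelDensity, indicator_univ, gradInner_norm_sub_sq]
  ring

lemma continuous_max_mul_circleAverage (hφ : Continuous φ) (c : ℂ) :
    Continuous fun t => max t 0 * Real.circleAverage φ c √t :=
  (continuous_id.max continuous_const).mul
    ((Real.Continuous.circleAverage hφ).comp Real.continuous_sqrt)

lemma integrable_max_mul_circleAverage (hφ : Continuous φ) (hφc : HasCompactSupport φ) (c : ℂ) :
    Integrable fun t => max t 0 * Real.circleAverage φ c √t := by
  obtain ⟨ρ, hρ⟩ := hφc.isCompact.isBounded.subset_closedBall c
  refine (continuous_max_mul_circleAverage hφ c).integrable_of_hasCompactSupport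
    (HasCompactSupport.intro (isCompact_Icc (a := 0) (b := ρ ^ 2)) fun t ht => ?_)
  rcases le_or_gt t 0 with h | h
  · rw [max_eq_right h, zero_mul]
  · suffices h_zero : Real.circleAverage φ c √t = 0 from mul_eq_zero_of_right _ h_zero
    have h_zero : EqOn φ (fun _ => 0) (sphere c |√t|) := fun z hz =>
      image_eq_zero_of_notMem_tsupport fun hz' => ht ⟨h.le, ?_⟩
    · rw [Real.circleAverage_congr_sphere h_zero, Real.circleAverage_const]
    · have h_le := hρ hz'
      rw [mem_closedBall, mem_sphere.1 hz, abs_of_nonneg (Real.sqrt_nonneg t)] at h_le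
      exact (Real.sqrt_le_left ((Real.sqrt_nonneg t).trans h_le)).1 h_le

lemma integral_mul_levelDensity_norm_sub_sq (hφ : Continuous φ) (hφc : HasCompactSupport φ)
    (n : ℕ) :
    ∫ z, φ z * levelDensity (fun z => ‖z - c‖ ^ 2) univ (R ^ 2) n z =
      π * ∫ t, deriv (deriv (smoothPos n)) (R ^ 2 - t) *
        (max t 0 * Real.circleAverage φ c √t) := by
  have h_cont : Continuous fun t => deriv (deriv (smoothPos n)) (R ^ 2 - t) * t :=
    ((continuous_deriv_deriv_smoothPos n).comp (continuous_const.sub continuous_id)).mul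
      continuous_id
  have h_int : Integrable fun z => (deriv (deriv (smoothPos n)) (R ^ 2 - ‖z - c‖ ^ 2) *
      ‖z - c‖ ^ 2) * φ z :=
    ((h_cont.comp (contDiff_norm_sub_sq c).continuous).mul hφ).integrable_of_hasCompactSupport
      hφc.mul_left
  simp_rw [levelDensity_norm_sub_sq, mul_comm (φ _)]
  rw [integral_comp_norm_sub_sq_mul c h_cont.measurable hφ.measurable h_int,
    ← integral_indicator measurableSet_Ioi]
  congr 2 with t
  rcases le_or_gt t 0 with h | h
  · rw [indicator_of_notMem (notMem_Ioi.2 h), max_eq_right h, zero_mul, mul_zero]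
  · rw [indicator_of_mem (mem_Ioi.2 h), max_eq_left h.le, mul_assoc]

-- Both sides are the limit of the integrals of `φ` against the level densities of `‖z - c‖ ^ 2`:
-- the right one by the Lelong–Jensen formula, the left one by polar coordinates.
lemma circleAverage_eq_of_hasCompactSupport (hφ : ContDiff ℝ 2 φ) (hφc : HasCompactSupport φ)
    (hR : 0 ≤ R) :
    π * R ^ 2 * Real.circleAverage φ c R =
      4⁻¹ * ∫ z in ball c R, ((R ^ 2 - ‖z - c‖ ^ 2) * lap φ z + φ z * 4) := by
  have h_sub := sublevel_norm_sub_sq (c := c) hR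
  have h_ball : closure (sublevel (fun z => ‖z - c‖ ^ 2) univ (R ^ 2)) ⊆ closedBall c R :=
    h_sub ▸ closure_ball_subset_closedBall
  have h_level := tendsto_integral_mul_levelDensity isOpen_univ (contDiff_norm_sub_sq c).contDiffOn
    ((isCompact_closedBall c R).of_isClosed_subset isClosed_closure h_ball) (subset_univ _)
    hφ.contDiffOn
  simp_rw [h_sub, lap_norm_sub_sq,
    integral_mul_levelDensity_norm_sub_sq hφ.continuous hφc] at h_level
  have h_avg := (tendsto_integral_deriv_deriv_smoothPos (x := R ^ 2)
    (integrable_max_mul_circleAverage hφ.continuous hφc c)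
    (continuous_max_mul_circleAverage hφ.continuous c).continuousAt).const_mul π
  rw [max_eq_left (sq_nonneg R), Real.sqrt_sq hR, ← mul_assoc] at h_avg
  exact tendsto_nhds_unique h_avg h_level

theorem circleAverage_eq_integral_lap (hΩ : IsOpen Ω) (hφ : ContDiffOn ℝ 2 φ Ω) (hR : 0 ≤ R)
    (hcR : closedBall c R ⊆ Ω) :
    π * R ^ 2 * Real.circleAverage φ c R =
      4⁻¹ * ∫ z in ball c R, ((R ^ 2 - ‖z - c‖ ^ 2) * lap φ z + φ z * 4) := by
  obtain ⟨G, hG, hGc, hGφ⟩ :=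
    exists_contDiff_eventuallyEq_nhdsSet hΩ (isCompact_closedBall c R) hcR hφ
  have h_sphere : EqOn G φ (sphere c |R|) := fun z hz =>
    hGφ.self_of_nhdsSet z (sphere_subset_closedBall (abs_of_nonneg hR ▸ hz))
  have h_ball : ∀ z ∈ ball c R, (R ^ 2 - ‖z - c‖ ^ 2) * lap G z + G z * 4 =
      (R ^ 2 - ‖z - c‖ ^ 2) * lap φ z + φ z * 4 := fun z hz => by
    have h_eq : G =ᶠ[𝓝 z] φ := hGφ.filter_mono (nhds_le_nhdsSet (ball_subset_closedBall hz))
    rw [lap_congr h_eq, h_eq.self_of_nhds]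
  rw [← Real.circleAverage_congr_sphere h_sphere, ← setIntegral_congr_fun measurableSet_ball h_ball]
  exact circleAverage_eq_of_hasCompactSupport hG hGc hR

end Disc

section Subharmonic

variable {u φ : ℂ → ℝ} {Ω : Set ℂ} {z : ℂ} {R : ℝ}

lemma le_of_forall_integral_le_mul {m : ℝ → ℝ} (hm : Continuous m) {T : ℝ} (hT : 0 ≤ T)
    (h : ∀ t ∈ Icc 0 T, ∫ s in 0..t, m s ≤ t * m t) : m 0 ≤ m T := by
  obtain ⟨t, ht, h_min⟩ := isCompact_Icc.exists_isMinOn (nonempty_Icc.2 hT) hm.continuousOn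
  suffices h_zero : m 0 ≤ m t from h_zero.trans (h_min (right_mem_Icc.2 hT))
  by_contra! h_lt
  have ht₀ : 0 < t := ht.1.lt_of_ne fun h_eq => h_lt.ne (h_eq ▸ rfl)
  have h_const : ∫ _ in 0..t, m t < ∫ s in 0..t, m s :=
    intervalIntegral.integral_lt_integral_of_continuousOn_of_le_of_exists_lt ht₀
      continuousOn_const hm.continuousOn
      (fun s hs => h_min ⟨hs.1.le, hs.2.trans ht.2⟩) ⟨0, left_mem_Icc.2 ht₀.le, h_lt⟩
  rw [intervalIntegral.integral_const, sub_zero, smul_eq_mul] at h_const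
  exact (h t ht).not_gt h_const

lemma integrableOn_ball_mul_lap (hΩ : IsOpen Ω) (hφ : ContDiffOn ℝ 2 φ Ω)
    (hzR : closedBall z R ⊆ Ω) :
    IntegrableOn (fun w => (R ^ 2 - ‖w - z‖ ^ 2) * lap φ w + φ w * 4) (ball z R) := by
  have h_cont : ContinuousOn (fun w => (R ^ 2 - ‖w - z‖ ^ 2) * lap φ w + φ w * 4) Ω :=
    ((continuous_const.sub (contDiff_norm_sub_sq z).continuous).continuousOn.mul
      (continuousOn_lap hΩ hφ)).add (hφ.continuousOn.mul continuousOn_const)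
  exact ((h_cont.mono hzR).integrableOn_compact (isCompact_closedBall z R)).mono_set
    ball_subset_closedBall

lemma integral_circleAverage_le_of_lap_nonneg {G : ℂ → ℝ} (hG : ContDiff ℝ 2 G) (hR : 0 ≤ R)
    (h_lap : ∀ w ∈ ball z R, 0 ≤ lap G w) :
    ∫ t in 0..R ^ 2, Real.circleAverage G z √t ≤ R ^ 2 * Real.circleAverage G z R := by
  have h_le : ∫ w in ball z R, G w * 4 ≤
      ∫ w in ball z R, ((R ^ 2 - ‖w - z‖ ^ 2) * lap G w + G w * 4) := by
    have h_int : IntegrableOn (fun w => G w * 4) (ball z R) :=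
      ((hG.continuous.mul continuous_const).continuousOn.integrableOn_compact
        (isCompact_closedBall z R)).mono_set ball_subset_closedBall
    refine setIntegral_mono_on h_int
      (integrableOn_ball_mul_lap isOpen_univ hG.contDiffOn (subset_univ _))
      measurableSet_ball fun w hw => ?_
    have h_norm : ‖w - z‖ ^ 2 ≤ R ^ 2 :=
      pow_le_pow_left₀ (norm_nonneg _) (mem_ball_iff_norm.1 hw).le 2
    exact le_add_of_nonneg_left (mul_nonneg (sub_nonneg.2 h_norm) (h_lap w hw))
  have h_mean :=
    circleAverage_eq_integral_lap (c := z) isOpen_univ hG.contDiffOn hR (subset_univ _)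
  rw [integral_mul_const, setIntegral_ball_eq_intervalIntegral hG.continuous z hR] at h_le
  refine le_of_mul_le_mul_left ?_ Real.pi_pos
  linarith

theorem subharmonicOn_of_lap_nonneg (hΩ : IsOpen Ω) (hu : ContDiffOn ℝ 2 u Ω)
    (hu₀ : ∀ z ∈ Ω, 0 ≤ lap u z) : SubharmonicOn u Ω := by
  refine ⟨hu.continuousOn, fun z _ r hr hrΩ => ?_⟩
  obtain ⟨G, hG, -, hGu⟩ :=
    exists_contDiff_eventuallyEq_nhdsSet hΩ (isCompact_closedBall z r) hrΩ hu
  have h_lap : ∀ w ∈ closedBall z r, 0 ≤ lap G w := fun w hw => by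
    rw [lap_congr (hGu.filter_mono (nhds_le_nhdsSet hw))]
    exact hu₀ w (hrΩ hw)
  have h_eq : EqOn G u (closedBall z r) := fun w hw => hGu.self_of_nhdsSet w hw
  have h_mono := le_of_forall_integral_le_mul
    ((Real.Continuous.circleAverage hG.continuous (c := z)).comp Real.continuous_sqrt)
    (sq_nonneg r) fun t ht => by
      have h_sqrt : √t ≤ r := Real.sqrt_le_left hr.le |>.2 ht.2
      simpa only [Real.sq_sqrt ht.1, Function.comp_apply] using
        integral_circleAverage_le_of_lap_nonneg hG (Real.sqrt_nonneg t) fun w hw =>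
          h_lap w (ball_subset_closedBall (ball_subset_ball h_sqrt hw))
  simp only [Function.comp_apply, Real.sqrt_zero, Real.circleAverage_zero,
    Real.sqrt_sq hr.le] at h_mono
  rw [h_eq (mem_closedBall_self hr.le), Real.circleAverage_congr_sphere
    (h_eq.mono ((abs_of_pos hr).symm ▸ sphere_subset_closedBall))] at h_mono
  exact h_mono

end Subharmonic

section Holomorphic

variable {f : ℂ → ℂ} {ψ : ℂ → ℝ} {z : ℂ}

lemma secondDeriv_comp_holomorphic (hψ : ContDiffAt ℝ 2 ψ (f z)) (hf : AnalyticAt ℂ f z) (v : ℂ) :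
    secondDeriv v (fun w => ψ (f w)) z =
      fderiv ℝ (fderiv ℝ ψ) (f z) (v * deriv f z) (v * deriv f z) +
        fderiv ℝ ψ (f z) (v * (v * deriv (deriv f) z)) := by
  have h_fst : (fun w => fderiv ℝ (fun y => ψ (f y)) w v) =ᶠ[𝓝 z]
      fun w => fderiv ℝ ψ (f w) (v * deriv f w) := by
    filter_upwards [hf.continuousAt.eventually (eventually_differentiableAt hψ),
      hf.eventually_analyticAt] with w hψw hfw
    have h := hψw.hasFDerivAt.comp w
      (hfw.differentiableAt.hasDerivAt.hasFDerivAt.restrictScalars ℝ)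
    exact congrArg (· v) h.fderiv
  have h_out : HasFDerivAt (fun w => fderiv ℝ ψ (f w)) _ z :=
    ((hψ.fderiv_right (m := 1) (by norm_num)).differentiableAt one_ne_zero).hasFDerivAt.comp z
      (hf.differentiableAt.hasDerivAt.hasFDerivAt.restrictScalars ℝ)
  have h_in : HasFDerivAt (fun w => v * deriv f w) _ z :=
    (hf.deriv.differentiableAt.hasDerivAt.hasFDerivAt.restrictScalars ℝ).const_mul v
  rw [secondDeriv, h_fst.fderiv_eq, (h_out.clm_apply h_in).fderiv]
  simp only [add_apply, ContinuousLinearMap.comp_apply, smul_apply,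
    ContinuousLinearMap.coe_restrictScalars', ContinuousLinearMap.toSpanSingleton_apply,
    smul_eq_mul, ContinuousLinearMap.flip_apply]
  exact add_comm _ _

lemma apply_add_apply_I_mul (B : ℂ →L[ℝ] ℂ →L[ℝ] ℝ) (a : ℂ) :
    B a a + B (I * a) (I * a) = ‖a‖ ^ 2 * (B 1 1 + B I I) := by
  have h_a : a = a.re • (1 : ℂ) + a.im • I := by
    rw [real_smul, real_smul, mul_one, re_add_im]
  have h_Ia : I * a = a.re • I - a.im • (1 : ℂ) := by
    apply Complex.ext <;> simp
  rw [h_Ia, ← normSq_eq_norm_sq, normSq_apply]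
  nth_rw 1 2 [h_a]
  simp only [map_add, map_sub, map_smul, add_apply, sub_apply, smul_apply, smul_eq_mul]
  ring

lemma lap_comp_holomorphic (hψ : ContDiffAt ℝ 2 ψ (f z)) (hf : AnalyticAt ℂ f z) :
    lap (fun w => ψ (f w)) z = ‖deriv f z‖ ^ 2 * lap ψ (f z) := by
  have h_id (v : ℂ) : secondDeriv v ψ (f z) = fderiv ℝ (fderiv ℝ ψ) (f z) v v := by
    simpa using secondDeriv_comp_holomorphic (f := id) (z := f z) hψ analyticAt_id v
  change secondDeriv 1 _ z + secondDeriv I _ z =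
    ‖deriv f z‖ ^ 2 * (secondDeriv 1 ψ (f z) + secondDeriv I ψ (f z))
  rw [h_id, h_id, ← apply_add_apply_I_mul, secondDeriv_comp_holomorphic hψ hf,
    secondDeriv_comp_holomorphic hψ hf, ← mul_assoc I, I_mul_I, neg_one_mul, map_neg]
  simp only [one_mul]
  ring

end Holomorphic

section PowerLaplacian

variable {a : ℝ} {c z : ℂ}

lemma hasDerivAt_add_rpow {s : ℝ} (hs : 0 < a + s) (p : ℝ) :
    HasDerivAt (fun t => (a + t) ^ p) (p * (a + s) ^ (p - 1)) s := by
  simpa using ((hasDerivAt_id s).const_add a).rpow_const (p := p) (.inl hs.ne')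

lemma deriv_deriv_add_rpow {s : ℝ} (hs : 0 < a + s) (p : ℝ) :
    deriv (deriv fun t => (a + t) ^ p) s = p * ((p - 1) * (a + s) ^ (p - 2)) := by
  have h_ev : ∀ᶠ t in 𝓝 s, 0 < a + t := (continuous_const.add continuous_id).continuousAt.eventually
    (lt_mem_nhds hs)
  have h_eq : deriv (fun t => (a + t) ^ p) =ᶠ[𝓝 s] fun t => p * (a + t) ^ (p - 1) :=
    h_ev.mono fun t ht => (hasDerivAt_add_rpow ht p).deriv
  rw [h_eq.deriv_eq, ((hasDerivAt_add_rpow hs (p - 1)).const_mul p).deriv, sub_sub,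
    one_add_one_eq_two]

lemma contDiffAt_add_norm_sub_sq_rpow (hz : 0 < a + ‖z - c‖ ^ 2) (p : ℝ) :
    ContDiffAt ℝ 2 (fun w => (a + ‖w - c‖ ^ 2) ^ p) z :=
  (contDiffAt_const.add (contDiff_norm_sub_sq c).contDiffAt).rpow_const_of_ne hz.ne'

lemma lap_add_norm_sub_sq_rpow (hz : 0 < a + ‖z - c‖ ^ 2) (p : ℝ) :
    lap (fun w => (a + ‖w - c‖ ^ 2) ^ p) z =
      4 * p * (a + p * ‖z - c‖ ^ 2) * (a + ‖z - c‖ ^ 2) ^ (p - 2) := by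
  have h_pow : (a + ‖z - c‖ ^ 2) ^ (p - 1) = (a + ‖z - c‖ ^ 2) ^ (p - 2) * (a + ‖z - c‖ ^ 2) := by
    rw [← Real.rpow_add_one hz.ne']
    ring_nf
  have h_smooth : ContDiffAt ℝ 2 (fun t => (a + t) ^ p) (‖z - c‖ ^ 2) :=
    ContDiffAt.rpow_const_of_ne (contDiffAt_const.add contDiffAt_id) hz.ne'
  rw [lap_comp h_smooth (contDiff_norm_sub_sq c).contDiffAt, deriv_deriv_add_rpow hz,
    (hasDerivAt_add_rpow hz p).deriv, gradInner_norm_sub_sq, lap_norm_sub_sq, h_pow]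
  ring

end PowerLaplacian

section RegularisedNorm

variable {f : ℂ → ℂ} {z : ℂ} {Ω : Set ℂ}

/-- The regularised modulus `√(1 + ‖f‖²)`: within `1` of `‖f‖`, but smooth also where `f`
vanishes. -/
def regNorm (f : ℂ → ℂ) (z : ℂ) : ℝ :=
  (1 + ‖f z‖ ^ 2) ^ (1 / 2 : ℝ)

lemma regNorm_eq_sqrt (f : ℂ → ℂ) (z : ℂ) : regNorm f z = √(1 + ‖f z‖ ^ 2) :=
  (Real.sqrt_eq_rpow _).symm

lemma regNorm_nonneg (f : ℂ → ℂ) (z : ℂ) : 0 ≤ regNorm f z :=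
  Real.rpow_nonneg (by positivity) _

lemma norm_le_regNorm (f : ℂ → ℂ) (z : ℂ) : ‖f z‖ ≤ regNorm f z :=
  regNorm_eq_sqrt f z ▸ Real.le_sqrt_of_sq_le (le_add_of_nonneg_left zero_le_one)

lemma regNorm_le (f : ℂ → ℂ) (z : ℂ) : regNorm f z ≤ ‖f z‖ + 1 :=
  regNorm_eq_sqrt f z ▸ Real.sqrt_le_iff.2 ⟨by positivity, by nlinarith [norm_nonneg (f z)]⟩

lemma contDiff_regNorm_id : ContDiff ℝ 2 (regNorm id) :=
  contDiff_iff_contDiffAt.2 fun w => by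
    simpa only [sub_zero] using! contDiffAt_add_norm_sub_sq_rpow (c := 0) (z := w)
      (by positivity : 0 < 1 + ‖w - 0‖ ^ 2) (1 / 2)

lemma contDiffOn_regNorm (hΩ : IsOpen Ω) (hf : DifferentiableOn ℂ f Ω) :
    ContDiffOn ℝ 2 (regNorm f) Ω :=
  contDiff_regNorm_id.comp_contDiffOn ((hf.contDiffOn hΩ).restrict_scalars ℝ)

lemma lap_regNorm_id_nonneg (w : ℂ) : 0 ≤ lap (regNorm id) w := by
  have h := lap_add_norm_sub_sq_rpow (c := 0) (z := w)
    (by positivity : 0 < 1 + ‖w - 0‖ ^ 2) (1 / 2)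
  simp only [sub_zero] at h
  exact h.ge.trans' (by positivity)

lemma lap_regNorm_nonneg (hf : AnalyticAt ℂ f z) : 0 ≤ lap (regNorm f) z :=
  (lap_comp_holomorphic contDiff_regNorm_id.contDiffAt hf).ge.trans'
    (mul_nonneg (sq_nonneg _) (lap_regNorm_id_nonneg _))

end RegularisedNorm

local notation "𝔻" => ball (0 : ℂ) 1

section SmoothExhaustion

/-- A negative `C²` subharmonic exhaustion function of an open set with finite Monge–Ampère mass,
subharmonicity being expressed by the sign of the Laplacian. -/
structure IsSmoothExhaustion (u : ℂ → ℝ) (Ω : Set ℂ) : Prop where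
  isOpen : IsOpen Ω
  contDiffOn : ContDiffOn ℝ 2 u Ω
  neg : ∀ z ∈ Ω, u z < 0
  lap_nonneg : ∀ z ∈ Ω, 0 ≤ lap u z
  isCompact_closure : ∀ r < 0, IsCompact (closure (sublevel u Ω r))
  closure_subset : ∀ r < 0, closure (sublevel u Ω r) ⊆ Ω
  isFiniteMeasure : IsFiniteMeasure (laplacianMeasure u Ω)

variable {u ψ : ℂ → ℝ} {f : ℂ → ℂ} {Ω K : Set ℂ} {r R c : ℝ} {σ : Measure ℂ} {μ : ℝ → Measure ℂ}

namespace IsSmoothExhaustion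

lemma isExhaustion (hu : IsSmoothExhaustion u Ω) : IsExhaustion u Ω where
  neg := hu.neg
  subh := subharmonicOn_of_lap_nonneg hu.isOpen hu.contDiffOn hu.lap_nonneg
  exh r hr := ⟨hu.isCompact_closure r hr, hu.closure_subset r hr⟩

lemma measurableSet_sublevel (hu : IsSmoothExhaustion u Ω) (r : ℝ) :
    MeasurableSet (sublevel u Ω r) :=
  (isOpen_sublevel hu.isOpen hu.contDiffOn.continuousOn).measurableSet

lemma eventually_subset_sublevel (hu : IsSmoothExhaustion u Ω) (hK : IsCompact K) (hKΩ : K ⊆ Ω) :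
    ∀ᶠ r in 𝓝[<] (0 : ℝ), K ⊆ sublevel u Ω r := by
  rcases K.eq_empty_or_nonempty with rfl | hK_ne
  · exact .of_forall fun _ => empty_subset _
  obtain ⟨z₀, hz₀, h_max⟩ :=
    hK.exists_isMaxOn hK_ne (hu.contDiffOn.continuousOn.mono hKΩ)
  filter_upwards [nhdsWithin_le_nhds (lt_mem_nhds (hu.neg z₀ (hKΩ hz₀)))] with r hr z hz
  exact ⟨hKΩ hz, (h_max hz).trans_lt hr⟩

lemma measureReal_univ_le (hu : IsSmoothExhaustion u Ω) (hσ : IsLevelMeasure u Ω r σ) :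
    σ.real univ ≤ (laplacianMeasure u Ω).real univ := by
  have := hu.isFiniteMeasure
  have h_mass : ∫ _, (1 : ℝ) ∂σ = ∫ _, 1 ∂laplacianMeasure u (sublevel u Ω r) := by
    have h_lap (z : ℂ) : lap (fun _ => 1) z = 0 := by
      simp only [lap, fderiv_fun_const, Pi.zero_apply, zero_apply, add_zero]
    rw [hσ.lelong_jensen _ contDiffOn_const, integral_laplacianMeasure hu.isOpen hu.contDiffOn
      hu.lap_nonneg (hu.measurableSet_sublevel r) fun _ hz => hz.1]
    simp only [h_lap, mul_zero, zero_add]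
  rw [integral_const, integral_const, smul_eq_mul, smul_eq_mul, mul_one, mul_one,
    ← restrict_laplacianMeasure (hu.measurableSet_sublevel r) fun _ hz => hz.1] at h_mass
  rw [h_mass]
  exact ENNReal.toReal_mono (measure_ne_top _ _) (Measure.restrict_le_self univ)

lemma eventually_integral_regNorm_le (hu : IsSmoothExhaustion u Ω)
    (hμ : ∀ r < 0, IsLevelMeasure u Ω r (μ r)) (hf : MemPS 1 Ω μ f) :
    ∃ M, ∀ᶠ r in 𝓝[<] (0 : ℝ), ∫ z, regNorm f z ∂μ r ≤ M := by
  have := hu.isFiniteMeasure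
  obtain ⟨b, hfb, hb⟩ := exists_between hf.2
  refine ⟨b.toReal + (laplacianMeasure u Ω).real univ, ?_⟩
  filter_upwards [eventually_lt_of_limsup_lt hfb, self_mem_nhdsWithin] with r hrb hr
  have := (hμ r hr).finite
  have h_lintegral : ∫⁻ z, ENNReal.ofReal ‖regNorm f z‖ ∂μ r ≤ b + μ r univ := by
    calc ∫⁻ z, ENNReal.ofReal ‖regNorm f z‖ ∂μ r
        ≤ ∫⁻ z, (ENNReal.ofReal (‖f z‖ ^ (1 : ℝ)) + 1) ∂μ r := by
          refine lintegral_mono fun z => ?_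
          rw [Real.rpow_one, Real.norm_of_nonneg (regNorm_nonneg f z), ← ENNReal.ofReal_one,
            ← ENNReal.ofReal_add (norm_nonneg _) zero_le_one]
          exact ENNReal.ofReal_le_ofReal (regNorm_le f z)
      _ ≤ b + μ r univ := by
          rw [lintegral_add_right _ measurable_const, lintegral_one]
          exact add_le_add_left hrb.le _
  calc ∫ z, regNorm f z ∂μ r
      ≤ (∫⁻ z, ENNReal.ofReal ‖regNorm f z‖ ∂μ r).toReal :=
        (Real.le_norm_self _).trans (norm_integral_le_lintegral_norm _)
    _ ≤ (b + μ r univ).toReal :=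
        ENNReal.toReal_mono (ENNReal.add_ne_top.2 ⟨hb.ne, measure_ne_top _ _⟩) h_lintegral
    _ = b.toReal + (μ r).real univ := ENNReal.toReal_add hb.ne (measure_ne_top _ _)
    _ ≤ b.toReal + (laplacianMeasure u Ω).real univ :=
        add_le_add_right (hu.measureReal_univ_le (hμ r hr)) _

lemma integrableOn_lelongJensen (hu : IsSmoothExhaustion u Ω) (hr : r < 0)
    (hψ : ContDiffOn ℝ 2 ψ Ω) :
    IntegrableOn (fun z => (r - u z) * lap ψ z + ψ z * lap u z) (sublevel u Ω r) :=
  integrableOn_sublevel (hu.isCompact_closure r hr) (hu.closure_subset r hr)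
    (((continuousOn_const.sub hu.contDiffOn.continuousOn).mul (continuousOn_lap hu.isOpen hψ)).add
      (hψ.continuousOn.mul (continuousOn_lap hu.isOpen hu.contDiffOn)))

lemma setIntegral_lelongJensen_le (hu : IsSmoothExhaustion u Ω) (hσ : IsLevelMeasure u Ω r σ)
    (hr : r < 0) (hψ : ContDiffOn ℝ 2 ψ Ω) (hψ₀ : ∀ z ∈ Ω, 0 ≤ ψ z)
    (hψ_lap : ∀ z ∈ Ω, 0 ≤ lap ψ z) (hK : K ⊆ sublevel u Ω r) :
    4⁻¹ * ∫ z in K, ((r - u z) * lap ψ z + ψ z * lap u z) ≤ ∫ z, ψ z ∂σ := by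
  rw [hσ.lelong_jensen ψ hψ]
  refine mul_le_mul_of_nonneg_left (setIntegral_mono_set (hu.integrableOn_lelongJensen hr hψ) ?_
    hK.eventuallyLE) (by norm_num)
  filter_upwards [ae_restrict_mem (hu.measurableSet_sublevel r)] with z hz
  exact add_nonneg (mul_nonneg (sub_nonneg.2 hz.2.le) (hψ_lap z hz.1))
    (mul_nonneg (hψ₀ z hz.1) (hu.lap_nonneg z hz.1))

theorem exists_setIntegral_norm_mul_lap_le (hu : IsSmoothExhaustion u Ω)
    (hμ : ∀ r < 0, IsLevelMeasure u Ω r (μ r)) (hf : MemPS 1 Ω μ f) :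
    ∃ M, ∀ K, IsCompact K → K ⊆ Ω → ∫ z in K, ‖f z‖ * lap u z ≤ M := by
  obtain ⟨M, hM⟩ := hu.eventually_integral_regNorm_le hμ hf
  refine ⟨4 * M, fun K hK hKΩ => ?_⟩
  obtain ⟨r, ⟨hrM, hrK⟩, hr⟩ :=
    ((hM.and (hu.eventually_subset_sublevel hK hKΩ)).and self_mem_nhdsWithin).exists
  have hψ := contDiffOn_regNorm hu.isOpen hf.1
  have hψ_lap (z : ℂ) (hz : z ∈ Ω) : 0 ≤ lap (regNorm f) z :=
    lap_regNorm_nonneg (hf.1.analyticAt (hu.isOpen.mem_nhds hz))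
  have h_le : ∫ z in K, ‖f z‖ * lap u z ≤
      ∫ z in K, ((r - u z) * lap (regNorm f) z + regNorm f z * lap u z) := by
    refine setIntegral_mono_on (ContinuousOn.integrableOn_compact hK ?_)
      ((hu.integrableOn_lelongJensen hr hψ).mono_set hrK) hK.measurableSet fun z hz => ?_
    · exact (hf.1.continuousOn.mono hKΩ).norm.mul
        ((continuousOn_lap hu.isOpen hu.contDiffOn).mono hKΩ)
    · exact le_add_of_nonneg_of_le
        (mul_nonneg (sub_nonneg.2 (hrK hz).2.le) (hψ_lap z (hKΩ hz)))
        (mul_le_mul_of_nonneg_right (norm_le_regNorm f z) (hu.lap_nonneg z (hKΩ hz)))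
  linarith [hu.setIntegral_lelongJensen_le (hμ r hr) hr hψ (fun z _ => regNorm_nonneg f z) hψ_lap
    hrK]

lemma mul_circleAverage_le (hu : IsSmoothExhaustion u 𝔻)
    (hσ : IsLevelMeasure u 𝔻 r σ) (hr : r < 0) (hc : 0 < c) (h_lap : ∀ z ∈ 𝔻, 4 * c ≤ lap u z)
    (h_le : ∀ z ∈ 𝔻, u z ≤ -c * (1 - ‖z‖ ^ 2)) (hψ : ContDiffOn ℝ 2 ψ 𝔻)
    (hψ₀ : ∀ z ∈ 𝔻, 0 ≤ ψ z) (hψ_lap : ∀ z ∈ 𝔻, 0 ≤ lap ψ z) (hR : 0 ≤ R) (hR₁ : R < 1)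
    (hRr : -c * (1 - R ^ 2) ≤ r) :
    c * (π * R ^ 2 * Real.circleAverage ψ 0 R) ≤ ∫ z, ψ z ∂σ := by
  have h_gap (z : ℂ) (hz : z ∈ 𝔻) : c * (R ^ 2 - ‖z‖ ^ 2) ≤ r - u z := by
    linarith [h_le z hz]
  have h_sub : ball (0 : ℂ) R ⊆ sublevel u 𝔻 r := fun z hz => by
    have hz₁ := ball_subset_ball hR₁.le hz
    have h_sq : ‖z‖ ^ 2 < R ^ 2 :=
      pow_lt_pow_left₀ (mem_ball_zero_iff.1 hz) (norm_nonneg z) two_ne_zero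
    exact ⟨hz₁, sub_pos.1 ((mul_pos hc (sub_pos.2 h_sq)).trans_le (h_gap z hz₁))⟩
  refine le_trans ?_ (hu.setIntegral_lelongJensen_le hσ hr hψ hψ₀ hψ_lap h_sub)
  rw [circleAverage_eq_integral_lap isOpen_ball hψ hR (closedBall_subset_ball hR₁),
    mul_left_comm, ← integral_const_mul]
  refine mul_le_mul_of_nonneg_left (setIntegral_mono_on ((integrableOn_ball_mul_lap isOpen_ball hψ
    (closedBall_subset_ball hR₁)).const_mul c) ((hu.integrableOn_lelongJensen hr hψ).mono_set
    h_sub) measurableSet_ball fun z hz => ?_) (by norm_num)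
  have hz₁ := (h_sub hz).1
  rw [sub_zero]
  linarith [mul_le_mul_of_nonneg_right (h_gap z hz₁) (hψ_lap z hz₁),
    mul_le_mul_of_nonneg_left (h_lap z hz₁) (hψ₀ z hz₁)]

end IsSmoothExhaustion

end SmoothExhaustion

section DiscInclusion

variable {u : ℂ → ℝ} {f : ℂ → ℂ} {a c M : ℝ} {μ : ℝ → Measure ℂ}

lemma circleIntegrable_norm (hf : DifferentiableOn ℂ f 𝔻) {R : ℝ} (hR : 0 ≤ R) (hR₁ : R < 1) :
    CircleIntegrable (fun z => ‖f z‖) 0 R :=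
  (hf.continuousOn.norm.mono
    (sphere_subset_closedBall.trans (closedBall_subset_ball hR₁))).circleIntegrable hR

lemma memH1Disc_of_circleAverage_le (hf : DifferentiableOn ℂ f 𝔻) (ha : a < 1)
    (h : ∀ R, a ≤ R → R < 1 → Real.circleAverage (fun z => ‖f z‖) 0 R ≤ M) : MemH1Disc f := by
  obtain ⟨C, hC⟩ := (isCompact_closedBall (0 : ℂ) a).exists_bound_of_continuousOn
    (hf.continuousOn.mono (closedBall_subset_ball ha))
  refine ⟨hf, 2 * π * max M C, fun R hR hR₁ => ?_⟩
  have h_avg : Real.circleAverage (fun z => ‖f z‖) 0 R ≤ max M C := by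
    rcases le_total a R with haR | hRa
    · exact (h R haR hR₁).trans (le_max_left _ _)
    · refine le_max_of_le_right (Real.circleAverage_mono_on_of_le_circle
        (circleIntegrable_norm hf hR.le hR₁) fun z hz => hC z ?_)
      rw [abs_of_pos hR] at hz
      exact closedBall_subset_closedBall hRa (sphere_subset_closedBall hz)
  rw [Real.circleAverage_def, smul_eq_mul, inv_mul_le_iff₀ Real.two_pi_pos] at h_avg
  simpa only [circleMap, zero_add] using h_avg

theorem IsSmoothExhaustion.memH1Disc_of_memPS (hu : IsSmoothExhaustion u 𝔻)
    (hμ : ∀ r < 0, IsLevelMeasure u 𝔻 r (μ r)) (hc : 0 < c)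
    (h_lap : ∀ z ∈ 𝔻, 4 * c ≤ lap u z) (h_le : ∀ z ∈ 𝔻, u z ≤ -c * (1 - ‖z‖ ^ 2))
    (hf : MemPS 1 𝔻 μ f) : MemH1Disc f := by
  obtain ⟨M, hM⟩ := hu.eventually_integral_regNorm_le hμ hf
  refine memH1Disc_of_circleAverage_le (a := 1 / 2) (M := 4 * M / (c * π)) hf.1 (by norm_num)
    fun R hR hR₁ => ?_
  have hR₀ : 0 < R := one_half_pos.trans_le hR
  have h_neg : -c * (1 - R ^ 2) < 0 :=
    mul_neg_of_neg_of_pos (neg_neg_of_pos hc) (sub_pos.2 (pow_lt_one₀ hR₀.le hR₁ two_ne_zero))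
  obtain ⟨r, ⟨hrM, hRr⟩, hr⟩ :=
    ((hM.and (nhdsWithin_le_nhds (le_mem_nhds h_neg))).and self_mem_nhdsWithin).exists
  have hψ := contDiffOn_regNorm isOpen_ball hf.1
  have h_avg := hu.mul_circleAverage_le (hμ r hr) hr hc h_lap h_le hψ
    (fun z _ => regNorm_nonneg f z)
    (fun z hz => lap_regNorm_nonneg (hf.1.analyticAt (isOpen_ball.mem_nhds hz))) hR₀.le hR₁ hRr
  have h_mono : Real.circleAverage (fun z => ‖f z‖) 0 R ≤ Real.circleAverage (regNorm f) 0 R :=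
    Real.circleAverage_mono (circleIntegrable_norm hf.1 hR₀.le hR₁)
      ((hψ.continuousOn.mono (sphere_subset_closedBall.trans
        (closedBall_subset_ball hR₁))).circleIntegrable hR₀.le) fun z _ => norm_le_regNorm f z
  have h_nonneg : 0 ≤ Real.circleAverage (regNorm f) 0 R :=
    Real.circleAverage_nonneg_of_nonneg fun z _ => regNorm_nonneg f z
  refine h_mono.trans ((le_div_iff₀ (by positivity)).2 ?_)
  have h_sq : 1 / 4 ≤ R ^ 2 := by nlinarith
  nlinarith [mul_le_mul_of_nonneg_left h_sq (by positivity :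
    0 ≤ c * π * Real.circleAverage (regNorm f) 0 R)]

end DiscInclusion

section PinchedExhaustion

/-- The exhaustion function `(‖z‖² - 1) / ‖z - 1‖ ^ β` of the unit disc: at the boundary it decays
like the distance to the circle, but more slowly near the point `1`. -/
def pinchedExhaustion (β : ℝ) (z : ℂ) : ℝ :=
  (‖z‖ ^ 2 - 1) * ‖z - 1‖ ^ (-β)

variable {β : ℝ} {z : ℂ}

lemma norm_sub_one_pos (hz : z ∈ 𝔻) : 0 < ‖z - 1‖ :=
  norm_pos_iff.2 <| sub_ne_zero.2 fun h => by
    simp [h] at hz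

lemma norm_sub_one_le_two (hz : z ∈ 𝔻) : ‖z - 1‖ ≤ 2 := by
  linarith [norm_sub_le z 1, mem_ball_zero_iff.1 hz, norm_one (α := ℂ)]

lemma one_sub_norm_le_norm_sub_one (z : ℂ) : 1 - ‖z‖ ≤ ‖z - 1‖ := by
  simpa only [norm_one, norm_sub_rev] using norm_sub_norm_le 1 z

lemma one_sub_norm_sq_pos (hz : z ∈ 𝔻) : 0 < 1 - ‖z‖ ^ 2 :=
  sub_pos.2 (pow_lt_one₀ (norm_nonneg z) (mem_ball_zero_iff.1 hz) two_ne_zero)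

lemma one_sub_norm_sq_le (z : ℂ) : 1 - ‖z‖ ^ 2 ≤ 2 * (1 - ‖z‖) := by
  linarith [sq_nonneg (1 - ‖z‖)]

lemma half_le_norm_sub_one_rpow (hβ : 0 ≤ β) (hβ₁ : β ≤ 1) (hz : z ∈ 𝔻) :
    1 / 2 ≤ ‖z - 1‖ ^ (-β) :=
  calc (1 / 2 : ℝ) = 2 ^ (-1 : ℝ) := by norm_num [Real.rpow_neg_one]
    _ ≤ 2 ^ (-β) := Real.rpow_le_rpow_of_exponent_le one_le_two (neg_le_neg hβ₁)
    _ ≤ ‖z - 1‖ ^ (-β) := Real.rpow_le_rpow_of_nonpos (norm_sub_one_pos hz)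
        (norm_sub_one_le_two hz) (neg_nonpos.2 hβ)

lemma pinchedExhaustion_le (hβ : 0 ≤ β) (hβ₁ : β ≤ 1) (hz : z ∈ 𝔻) :
    pinchedExhaustion β z ≤ -(1 / 2) * (1 - ‖z‖ ^ 2) := by
  rw [pinchedExhaustion]
  linarith [mul_le_mul_of_nonneg_left (half_le_norm_sub_one_rpow hβ hβ₁ hz)
    (one_sub_norm_sq_pos hz).le]

lemma pinchedExhaustion_neg (hz : z ∈ 𝔻) : pinchedExhaustion β z < 0 :=
  mul_neg_of_neg_of_pos (sub_neg.2 (sub_pos.1 (one_sub_norm_sq_pos hz)))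
    (Real.rpow_pos_of_pos (norm_sub_one_pos hz) _)

lemma norm_sub_one_rpow_eq (p : ℝ) (z : ℂ) : ‖z - 1‖ ^ p = (0 + ‖z - 1‖ ^ 2) ^ (p / 2) := by
  rw [zero_add, ← Real.rpow_natCast, ← Real.rpow_mul (norm_nonneg _)]
  congr 1
  push_cast
  ring

lemma contDiffOn_pinchedExhaustion (β : ℝ) : ContDiffOn ℝ 2 (pinchedExhaustion β) 𝔻 := fun _ hz =>
  ((contDiff_id.norm_sq ℝ).contDiffAt.sub contDiffAt_const |>.mul
    ((contDiffAt_id.sub contDiffAt_const).norm ℝ (norm_pos_iff.1 (norm_sub_one_pos hz))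
      |>.rpow_const_of_ne (norm_sub_one_pos hz).ne')).contDiffWithinAt

lemma gradInner_norm_sq_norm_sub_sq_rpow (hz : z ≠ 1) (q : ℝ) :
    gradInner (fun w => ‖w - 0‖ ^ 2 - 1) (fun w => (0 + ‖w - 1‖ ^ 2) ^ q) z =
      2 * q * (‖z - 1‖ ^ 2 + ‖z‖ ^ 2 - 1) * (‖z - 1‖ ^ 2) ^ (q - 1) := by
  have h_pos : 0 < 0 + ‖z - 1‖ ^ 2 := by
    rw [zero_add]
    exact pow_pos (norm_pos_iff.2 (sub_ne_zero.2 hz)) 2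
  have h_rpow := hasDerivAt_add_rpow h_pos q
  have h_fderiv := fderiv_real_comp (f := fun w => ‖w - 1‖ ^ 2) h_rpow.differentiableAt
    ((contDiff_norm_sub_sq 1).differentiable two_ne_zero z)
  rw [gradInner, h_fderiv, h_rpow.deriv]
  simp only [fderiv_sub_const, smul_apply, fderiv_norm_sub_sq, smul_eq_mul, zero_re, zero_im,
    one_re, one_im, I_re, I_im, zero_add]
  rw [← normSq_eq_norm_sq z, normSq_apply, ← normSq_eq_norm_sq (z - 1), normSq_apply, sub_re,
    sub_im, one_re, one_im]
  ring

lemma lap_pinchedExhaustion (hz : z ≠ 1) (β : ℝ) :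
    lap (pinchedExhaustion β) z =
      (2 - β) * (2 * ‖z - 1‖ ^ (-β) + β * (1 - ‖z‖ ^ 2) * ‖z - 1‖ ^ (-β - 2)) := by
  have h_pos : 0 < ‖z - 1‖ ^ 2 := pow_pos (norm_pos_iff.2 (sub_ne_zero.2 hz)) 2
  have h_pos' : 0 < 0 + ‖z - 1‖ ^ 2 := by rwa [zero_add]
  have h_eq : pinchedExhaustion β =
      fun w => (‖w - 0‖ ^ 2 - 1) * (0 + ‖w - 1‖ ^ 2) ^ (-β / 2) := by
    funext w
    rw [pinchedExhaustion, norm_sub_one_rpow_eq, sub_zero]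
  have h_lap : lap (fun w => ‖w - 0‖ ^ 2 - 1) z = 4 := by
    simpa only [lap, fderiv_sub_const] using lap_norm_sub_sq 0 z
  have h_succ (p : ℝ) : (‖z - 1‖ ^ 2) ^ p = ‖z - 1‖ ^ 2 * (‖z - 1‖ ^ 2) ^ (p - 1) := by
    rw [mul_comm, ← Real.rpow_add_one h_pos.ne', sub_add_cancel]
  rw [h_eq, lap_mul ((contDiff_norm_sub_sq 0).contDiffAt.sub contDiffAt_const)
    (contDiffAt_add_norm_sub_sq_rpow h_pos' _), h_lap, lap_add_norm_sub_sq_rpow h_pos',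
    gradInner_norm_sq_norm_sub_sq_rpow hz, norm_sub_one_rpow_eq (-β),
    norm_sub_one_rpow_eq (-β - 2), sub_zero]
  simp only [zero_add]
  rw [show (-β - 2) / 2 = -β / 2 - 1 by ring, h_succ (-β / 2), h_succ (-β / 2 - 1)]
  ring_nf

lemma le_lap_pinchedExhaustion (hβ : 0 ≤ β) (hβ₁ : β ≤ 1) (hz : z ∈ 𝔻) :
    2 - β ≤ lap (pinchedExhaustion β) z := by
  have h_nonneg : 0 ≤ β * (1 - ‖z‖ ^ 2) * ‖z - 1‖ ^ (-β - 2) :=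
    mul_nonneg (mul_nonneg hβ (one_sub_norm_sq_pos hz).le) (Real.rpow_nonneg (norm_nonneg _) _)
  rw [lap_pinchedExhaustion (sub_ne_zero.1 (norm_pos_iff.1 (norm_sub_one_pos hz)))]
  exact le_mul_of_one_le_right (by linarith)
    (by linarith [half_le_norm_sub_one_rpow hβ hβ₁ hz])

lemma lap_pinchedExhaustion_le (hβ : 0 ≤ β) (hβ₁ : β ≤ 1) (hz : z ∈ 𝔻) :
    lap (pinchedExhaustion β) z ≤ 4 * ‖z - 1‖ ^ (-β) + 4 * ‖z - 1‖ ^ (-β - 1) := by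
  have h_pos := norm_sub_one_pos hz
  have h_succ : ‖z - 1‖ ^ (-β - 1) = ‖z - 1‖ * ‖z - 1‖ ^ (-β - 2) := by
    rw [mul_comm, ← Real.rpow_add_one h_pos.ne']
    ring_nf
  have h_le : (1 - ‖z‖ ^ 2) * ‖z - 1‖ ^ (-β - 2) ≤ 2 * ‖z - 1‖ ^ (-β - 1) := by
    rw [h_succ, ← mul_assoc]
    refine mul_le_mul_of_nonneg_right ?_ (Real.rpow_nonneg h_pos.le _)
    linarith [one_sub_norm_sq_le z, one_sub_norm_le_norm_sub_one z]
  have h_nonneg : 0 ≤ (1 - ‖z‖ ^ 2) * ‖z - 1‖ ^ (-β - 2) :=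
    mul_nonneg (one_sub_norm_sq_pos hz).le (Real.rpow_nonneg h_pos.le _)
  rw [lap_pinchedExhaustion (sub_ne_zero.1 (norm_pos_iff.1 h_pos)), mul_assoc β]
  calc (2 - β) * (2 * ‖z - 1‖ ^ (-β) + β * ((1 - ‖z‖ ^ 2) * ‖z - 1‖ ^ (-β - 2)))
      ≤ 2 * (2 * ‖z - 1‖ ^ (-β) + 1 * (2 * ‖z - 1‖ ^ (-β - 1))) := by
        gcongr
        linarith
    _ = 4 * ‖z - 1‖ ^ (-β) + 4 * ‖z - 1‖ ^ (-β - 1) := by ring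

lemma norm_le_of_pinchedExhaustion_lt (hβ : 0 ≤ β) (hβ₁ : β < 1) {r : ℝ} (hr : r < 0) (hz : z ∈ 𝔻)
    (h : pinchedExhaustion β z < r) : ‖z‖ ≤ 1 - (-r / 2) ^ (1 - β)⁻¹ := by
  have h_pos : 0 < 1 - ‖z‖ := sub_pos.2 (mem_ball_zero_iff.1 hz)
  have h_le : -r ≤ 2 * (1 - ‖z‖) ^ (1 - β) := by
    calc -r ≤ (1 - ‖z‖ ^ 2) * ‖z - 1‖ ^ (-β) := by
          rw [pinchedExhaustion] at h
          linarith
      _ ≤ (2 * (1 - ‖z‖)) * (1 - ‖z‖) ^ (-β) :=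
          mul_le_mul (one_sub_norm_sq_le z) (Real.rpow_le_rpow_of_nonpos h_pos
            (one_sub_norm_le_norm_sub_one z) (neg_nonpos.2 hβ))
            (Real.rpow_nonneg (norm_nonneg _) _) (by positivity)
      _ = 2 * (1 - ‖z‖) ^ (1 - β) := by
          rw [mul_assoc, mul_comm (1 - ‖z‖), ← Real.rpow_add_one h_pos.ne', neg_add_eq_sub]
  have := (Real.rpow_inv_le_iff_of_pos (x := -r / 2) (by linarith) h_pos.le (sub_pos.2 hβ₁)).2
    (by linarith)
  linarith

lemma closure_sublevel_pinchedExhaustion_subset (hβ : 0 ≤ β) (hβ₁ : β < 1) {r : ℝ} (hr : r < 0) :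
    closure (sublevel (pinchedExhaustion β) 𝔻 r) ⊆ closedBall 0 (1 - (-r / 2) ^ (1 - β)⁻¹) :=
  closure_minimal (fun _ hz => mem_closedBall_zero_iff.2
    (norm_le_of_pinchedExhaustion_lt hβ hβ₁ hr hz.1 hz.2)) isClosed_closedBall

lemma integrableOn_norm_rpow {s : ℝ} (hs : -2 < s) {R : ℝ} (hR : 0 < R) :
    IntegrableOn (fun z : ℂ => ‖z‖ ^ s) (ball 0 R) := by
  rw [integrableOn_fun_norm_addHaar (μ := (volume : Measure ℂ)) (f := fun x => x ^ s)]
  refine ((intervalIntegral.integrableOn_Ioo_rpow_iff (s := s + 1) hR).2 (by linarith)).congr_fun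
    (fun y hy => ?_) measurableSet_Ioo
  simp only [Complex.finrank_real_complex, Real.rpow_add_one hy.1.ne', smul_eq_mul]
  ring

lemma integrableOn_norm_sub_one_rpow {s : ℝ} (hs : -2 < s) :
    IntegrableOn (fun z : ℂ => ‖z - 1‖ ^ s) 𝔻 := by
  have h := (integrableOn_norm_rpow hs two_pos).integrable_indicator measurableSet_ball
  refine ((h.comp_sub_right 1).integrableOn (s := 𝔻)).congr_fun (fun z hz => ?_) measurableSet_ball
  refine indicator_of_mem (mem_ball_zero_iff.2 ?_) _
  linarith [norm_sub_le z 1, mem_ball_zero_iff.1 hz, norm_one (α := ℂ)]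

lemma isFiniteMeasure_laplacianMeasure_pinchedExhaustion (hβ : 0 ≤ β) (hβ₁ : β < 1) :
    IsFiniteMeasure (laplacianMeasure (pinchedExhaustion β) 𝔻) := by
  have h_bound : IntegrableOn (fun z : ℂ => 4 * ‖z - 1‖ ^ (-β) + 4 * ‖z - 1‖ ^ (-β - 1)) 𝔻 :=
    ((integrableOn_norm_sub_one_rpow (by linarith)).const_mul 4).add
      ((integrableOn_norm_sub_one_rpow (by linarith)).const_mul 4)
  have h_lap : IntegrableOn (lap (pinchedExhaustion β)) 𝔻 := by
    refine h_bound.mono' ((continuousOn_lap isOpen_ball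
      (contDiffOn_pinchedExhaustion β)).aestronglyMeasurable measurableSet_ball) ?_
    filter_upwards [ae_restrict_mem measurableSet_ball] with z hz
    rw [Real.norm_of_nonneg (by linarith [le_lap_pinchedExhaustion hβ hβ₁.le hz])]
    exact lap_pinchedExhaustion_le hβ hβ₁.le hz
  exact isFiniteMeasure_withDensity_ofReal (h_lap.const_mul 4⁻¹).2

theorem isSmoothExhaustion_pinchedExhaustion (hβ : 0 ≤ β) (hβ₁ : β < 1) :
    IsSmoothExhaustion (pinchedExhaustion β) 𝔻 where
  isOpen := isOpen_ball
  contDiffOn := contDiffOn_pinchedExhaustion β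
  neg _ hz := pinchedExhaustion_neg hz
  lap_nonneg z hz := by linarith [le_lap_pinchedExhaustion hβ hβ₁.le hz]
  isCompact_closure _ hr := (isCompact_closedBall _ _).of_isClosed_subset isClosed_closure
    (closure_sublevel_pinchedExhaustion_subset hβ hβ₁ hr)
  closure_subset r hr := (closure_sublevel_pinchedExhaustion_subset hβ hβ₁ hr).trans
    (closedBall_subset_ball (sub_lt_self 1 (Real.rpow_pos_of_pos (by linarith) _)))
  isFiniteMeasure := isFiniteMeasure_laplacianMeasure_pinchedExhaustion hβ hβ₁

end PinchedExhaustion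

section BoundarySingularity

/-- The holomorphic function `(1 - z) ^ (-γ)` on the unit disc, singular at the boundary point `1`,
with the principal branch of the power. -/
def boundarySingularity (γ : ℝ) (z : ℂ) : ℂ :=
  (1 - z) ^ ((-γ : ℝ) : ℂ)

variable {β γ : ℝ}

lemma norm_boundarySingularity (γ : ℝ) (z : ℂ) : ‖boundarySingularity γ z‖ = ‖z - 1‖ ^ (-γ) := by
  rw [boundarySingularity, norm_cpow_real, norm_sub_rev]

lemma differentiableOn_boundarySingularity (γ : ℝ) :
    DifferentiableOn ℂ (boundarySingularity γ) 𝔻 := fun z hz => by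
  have h_slit : 1 - z ∈ slitPlane := by
    rw [sub_eq_add_neg]
    exact mem_slitPlane_of_norm_lt_one (by rwa [norm_neg, ← mem_ball_zero_iff])
  exact (((differentiableAt_id.const_sub 1).cpow_const h_slit)).differentiableWithinAt

lemma norm_exp_ofReal_mul_I_sub_one {θ : ℝ} (hθ : θ ∈ Icc 0 (2 * π)) :
    ‖exp (θ * I) - 1‖ = 2 * Real.sin (θ / 2) := by
  rw [mul_comm, norm_exp_I_mul_ofReal_sub_one, Real.norm_of_nonneg]
  exact mul_nonneg zero_le_two (Real.sin_nonneg_of_nonneg_of_le_pi (by linarith [hθ.1])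
    (by linarith [hθ.2]))

lemma norm_sub_one_le_two_mul_norm_mul_sub_one {R : ℝ} (hR : R ∈ Icc 0 1) {w : ℂ} (hw : ‖w‖ = 1) :
    ‖w - 1‖ ≤ 2 * ‖R * w - 1‖ := by
  have h_radial : ‖w - R * w‖ = 1 - R := by
    rw [← one_sub_mul, norm_mul, hw, mul_one, ← ofReal_one, ← ofReal_sub, norm_real,
      Real.norm_of_nonneg (sub_nonneg.2 hR.2)]
  have h_norm : ‖R * w‖ = R := by
    rw [norm_mul, hw, mul_one, norm_real, Real.norm_of_nonneg hR.1]
  linarith [norm_sub_le_norm_sub_add_norm_sub w (R * w) 1,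
    h_norm ▸ one_sub_norm_le_norm_sub_one (R * w)]

lemma min_le_pi_mul_norm_sub_one {R θ : ℝ} (hR : R ∈ Icc 0 1) (hθ : θ ∈ Icc 0 (2 * π)) :
    min θ (2 * π - θ) ≤ π * ‖R * exp (θ * I) - 1‖ := by
  have h_sin : min θ (2 * π - θ) ≤ π * Real.sin (θ / 2) := by
    rcases le_total θ π with h | h
    · refine (min_le_left _ _).trans ?_
      have := Real.mul_le_sin (x := θ / 2) (by linarith [hθ.1]) (by linarith)
      rwa [div_mul_div_cancel₀' two_ne_zero, div_le_iff₀' Real.pi_pos] at this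
    · refine (min_le_right _ _).trans ?_
      have := Real.mul_le_sin (x := (2 * π - θ) / 2) (by linarith [hθ.2]) (by linarith)
      rwa [div_mul_div_cancel₀' two_ne_zero, div_le_iff₀' Real.pi_pos, sub_div,
        mul_div_cancel_left₀ π two_ne_zero, Real.sin_pi_sub] at this
  refine h_sin.trans (mul_le_mul_of_nonneg_left ?_ Real.pi_nonneg)
  linarith [norm_exp_ofReal_mul_I_sub_one hθ,
    norm_sub_one_le_two_mul_norm_mul_sub_one hR (norm_exp_ofReal_mul_I θ)]

lemma norm_boundarySingularity_le (hγ : 0 ≤ γ) {R θ : ℝ} (hR : R ∈ Icc 0 1)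
    (hθ : θ ∈ Ioo 0 (2 * π)) :
    ‖boundarySingularity γ (R * exp (θ * I))‖ ≤ π ^ γ * (θ ^ (-γ) + (2 * π - θ) ^ (-γ)) := by
  have h_min : 0 < min θ (2 * π - θ) := lt_min hθ.1 (sub_pos.2 hθ.2)
  have h_le := min_le_pi_mul_norm_sub_one hR (Ioo_subset_Icc_self hθ)
  calc ‖boundarySingularity γ (R * exp (θ * I))‖
      = π ^ γ * (π * ‖R * exp (θ * I) - 1‖) ^ (-γ) := by
        rw [norm_boundarySingularity, Real.mul_rpow Real.pi_nonneg (norm_nonneg _),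
          Real.rpow_neg Real.pi_nonneg,
          mul_inv_cancel_left₀ (Real.rpow_pos_of_pos Real.pi_pos γ).ne']
    _ ≤ π ^ γ * min θ (2 * π - θ) ^ (-γ) :=
        mul_le_mul_of_nonneg_left
          (Real.rpow_le_rpow_of_nonpos h_min h_le (neg_nonpos.2 hγ)) (by positivity)
    _ ≤ π ^ γ * (θ ^ (-γ) + (2 * π - θ) ^ (-γ)) := by
        refine mul_le_mul_of_nonneg_left ?_ (by positivity)
        have h₁ : 0 ≤ θ ^ (-γ) := Real.rpow_nonneg hθ.1.le _
        have h₂ : 0 ≤ (2 * π - θ) ^ (-γ) := Real.rpow_nonneg (sub_nonneg.2 hθ.2.le) _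
        rcases min_choice θ (2 * π - θ) with h | h <;> rw [h] <;> linarith

theorem memH1Disc_boundarySingularity (hγ : 0 ≤ γ) (hγ₁ : γ < 1) :
    MemH1Disc (boundarySingularity γ) := by
  have h_left : IntervalIntegrable (fun θ : ℝ => θ ^ (-γ)) volume 0 (2 * π) :=
    intervalIntegral.intervalIntegrable_rpow' (by linarith)
  have h_right : IntervalIntegrable (fun θ : ℝ => (2 * π - θ) ^ (-γ)) volume 0 (2 * π) := by
    simpa only [sub_zero, sub_self] using (h_left.comp_sub_left (2 * π)).symm
  refine ⟨differentiableOn_boundarySingularity γ,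
    ∫ θ in (0 : ℝ)..(2 * π), π ^ γ * (θ ^ (-γ) + (2 * π - θ) ^ (-γ)), fun R hR hR₁ => ?_⟩
  have h_circle : Continuous fun θ : ℝ => boundarySingularity γ (R * exp (θ * I)) := by
    refine (differentiableOn_boundarySingularity γ).continuousOn.comp_continuous (by fun_prop)
      fun θ => ?_
    rwa [mem_ball_zero_iff, norm_mul, norm_exp_ofReal_mul_I, mul_one, norm_real,
      Real.norm_of_nonneg hR.le]
  exact intervalIntegral.integral_mono_on_of_le_Ioo Real.two_pi_pos.le
    (h_circle.norm.intervalIntegrable _ _) ((h_left.add h_right).const_mul _)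
    fun θ hθ => norm_boundarySingularity_le hγ ⟨hR.le, hR₁.le⟩ hθ

variable {ρ : ℝ} {z : ℂ}

-- The discs `closedBall (1 - ρ / 2) (ρ / 4)` approach `1` nontangentially: on them `1 - ‖z‖` and
-- `‖z - 1‖` are both comparable to `ρ`.
lemma norm_le_of_mem_closedBall_one_sub (hρ : ρ ≤ 2)
    (hz : z ∈ closedBall ((1 - ρ / 2 : ℝ) : ℂ) (ρ / 4)) : ‖z‖ ≤ 1 - ρ / 4 := by
  rw [mem_closedBall, dist_eq] at hz
  have h_center : ‖((1 - ρ / 2 : ℝ) : ℂ)‖ = 1 - ρ / 2 := by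
    rw [norm_real, Real.norm_of_nonneg (by linarith)]
  linarith [norm_le_norm_add_norm_sub' z ((1 - ρ / 2 : ℝ) : ℂ)]

lemma norm_sub_one_le_of_mem_closedBall_one_sub (hρ : 0 ≤ ρ)
    (hz : z ∈ closedBall ((1 - ρ / 2 : ℝ) : ℂ) (ρ / 4)) : ‖z - 1‖ ≤ ρ := by
  rw [mem_closedBall, dist_eq] at hz
  have h_center : ‖((1 - ρ / 2 : ℝ) : ℂ) - 1‖ = ρ / 2 := by
    rw [← ofReal_one, ← ofReal_sub, norm_real, Real.norm_of_nonpos (by linarith)]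
    ring
  linarith [norm_sub_le_norm_sub_add_norm_sub z ((1 - ρ / 2 : ℝ) : ℂ) 1]

lemma closedBall_one_sub_subset_unitDisc (hρ : 0 < ρ) (hρ₂ : ρ ≤ 2) :
    closedBall ((1 - ρ / 2 : ℝ) : ℂ) (ρ / 4) ⊆ 𝔻 := fun _ hz =>
  mem_ball_zero_iff.2 (by linarith [norm_le_of_mem_closedBall_one_sub hρ₂ hz])

lemma le_norm_boundarySingularity_mul_lap (hβ : 0 ≤ β) (hβ₁ : β ≤ 1) (hγ : 0 ≤ γ)
    (hρ : 0 < ρ) (hz : z ∈ 𝔻) (hz_norm : ‖z‖ ≤ 1 - ρ / 4) (hz_one : ‖z - 1‖ ≤ ρ) :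
    β / 4 * ρ ^ (-1 - β - γ) ≤
      ‖boundarySingularity γ z‖ * lap (pinchedExhaustion β) z := by
  have h_pos := norm_sub_one_pos hz
  have h_defect : ρ / 4 ≤ 1 - ‖z‖ ^ 2 := by
    nlinarith [norm_nonneg z, mem_ball_zero_iff.1 hz]
  have h_rpow {p : ℝ} (hp : p ≤ 0) : ρ ^ p ≤ ‖z - 1‖ ^ p :=
    Real.rpow_le_rpow_of_nonpos h_pos hz_one hp
  have h_lap : β * (ρ / 4) * ρ ^ (-β - 2) ≤ lap (pinchedExhaustion β) z := by
    rw [lap_pinchedExhaustion (sub_ne_zero.1 (norm_pos_iff.1 h_pos))]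
    have h_term : β * (ρ / 4) * ρ ^ (-β - 2) ≤ β * (1 - ‖z‖ ^ 2) * ‖z - 1‖ ^ (-β - 2) :=
      mul_le_mul (mul_le_mul_of_nonneg_left h_defect hβ) (h_rpow (by linarith)) (by positivity)
        (mul_nonneg hβ (one_sub_norm_sq_pos hz).le)
    have h_nonneg : 0 ≤ β * (1 - ‖z‖ ^ 2) * ‖z - 1‖ ^ (-β - 2) := h_term.trans' (by positivity)
    nlinarith [Real.rpow_nonneg h_pos.le (-β)]
  calc β / 4 * ρ ^ (-1 - β - γ) = ρ ^ (-γ) * (β * (ρ / 4) * ρ ^ (-β - 2)) := by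
        rw [show -1 - β - γ = -γ + 1 + (-β - 2) by ring, Real.rpow_add hρ, Real.rpow_add_one hρ.ne']
        ring
    _ ≤ ‖boundarySingularity γ z‖ * lap (pinchedExhaustion β) z := by
        rw [norm_boundarySingularity]
        exact mul_le_mul (h_rpow (neg_nonpos.2 hγ)) h_lap (by positivity) (by positivity)

lemma le_setIntegral_norm_boundarySingularity_mul_lap (hβ : 0 ≤ β) (hβ₁ : β ≤ 1) (hγ : 0 ≤ γ)
    (hρ : 0 < ρ) (hρ₂ : ρ ≤ 2) :
    π * β / 64 * ρ ^ (1 - β - γ) ≤ ∫ z in closedBall ((1 - ρ / 2 : ℝ) : ℂ) (ρ / 4),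
      ‖boundarySingularity γ z‖ * lap (pinchedExhaustion β) z := by
  have h_sub := closedBall_one_sub_subset_unitDisc hρ hρ₂
  have h_int : IntegrableOn (fun z => ‖boundarySingularity γ z‖ * lap (pinchedExhaustion β) z)
      (closedBall ((1 - ρ / 2 : ℝ) : ℂ) (ρ / 4)) :=
    (((differentiableOn_boundarySingularity γ).continuousOn.norm.mul (continuousOn_lap isOpen_ball
      (contDiffOn_pinchedExhaustion β))).mono h_sub).integrableOn_compact (isCompact_closedBall _ _)
  have h_volume : volume.real (closedBall ((1 - ρ / 2 : ℝ) : ℂ) (ρ / 4)) = π * (ρ / 4) ^ 2 := by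
    rw [measureReal_def, Complex.volume_closedBall, ENNReal.toReal_mul, ENNReal.toReal_pow,
      ENNReal.toReal_ofReal (by positivity), mul_comm]
    rfl
  calc π * β / 64 * ρ ^ (1 - β - γ)
      = β / 4 * ρ ^ (-1 - β - γ) *
          volume.real (closedBall ((1 - ρ / 2 : ℝ) : ℂ) (ρ / 4)) := by
        rw [h_volume, show 1 - β - γ = -1 - β - γ + (2 : ℕ) by push_cast; ring,
          Real.rpow_add_natCast hρ.ne']
        ring
    _ ≤ _ := setIntegral_ge_of_const_le_real measurableSet_closedBall
        measure_closedBall_lt_top.ne (fun z hz =>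
          le_norm_boundarySingularity_mul_lap hβ hβ₁ hγ hρ (h_sub hz)
            (norm_le_of_mem_closedBall_one_sub hρ₂ hz)
            (norm_sub_one_le_of_mem_closedBall_one_sub hρ.le hz)) h_int

theorem not_memPS_boundarySingularity (hβ : 0 < β) (hβ₁ : β < 1) (hγ : 1 - β < γ)
    {μ : ℝ → Measure ℂ} (hμ : ∀ r < 0, IsLevelMeasure (pinchedExhaustion β) 𝔻 r (μ r)) :
    ¬ MemPS 1 𝔻 μ (boundarySingularity γ) := fun h => by
  obtain ⟨M, hM⟩ :=
    (isSmoothExhaustion_pinchedExhaustion hβ.le hβ₁).exists_setIntegral_norm_mul_lap_le hμ h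
  have h_top : Tendsto (fun ρ : ℝ => π * β / 64 * ρ ^ (1 - β - γ)) (𝓝[>] 0) atTop :=
    (tendsto_rpow_neg_nhdsGT_zero (by linarith)).const_mul_atTop (by positivity)
  obtain ⟨ρ, hρM, hρ⟩ := ((h_top.eventually_gt_atTop M).and
    (Ioo_mem_nhdsGT two_pos)).exists
  exact hρM.not_ge ((le_setIntegral_norm_boundarySingularity_mul_lap hβ.le hβ₁.le
    (by linarith) hρ.1 hρ.2.le).trans (hM _ (isCompact_closedBall _ _)
      (closedBall_one_sub_subset_unitDisc hρ.1 hρ.2.le)))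

end BoundarySingularity

/-- There is a negative continuous subharmonic exhaustion `u` of the unit
disc with finite Monge–Ampère mass whose Poletsky–Stessin Hardy space `H^1_u(𝔻)` is a
proper subset of the classical Hardy space `H^1(𝔻)`. -/
theorem stmt2 :
    ∃ (u : ℂ → ℝ) (ν : Measure ℂ) (μfam : ℝ → Measure ℂ),
      IsExhaustion u (ball (0:ℂ) 1) ∧
      IsRieszMeasure u (ball (0:ℂ) 1) ν ∧
      ν Set.univ < ⊤ ∧
      (∀ r : ℝ, r < 0 → IsMAMeasure u (ball (0:ℂ) 1) ν r (μfam r)) ∧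
      {f : ℂ → ℂ | MemPS 1 (ball (0:ℂ) 1) μfam f} ⊂ {f : ℂ → ℂ | MemH1Disc f} := by
  have hu := isSmoothExhaustion_pinchedExhaustion (β := 1 / 2) (by norm_num) (by norm_num)
  have := hu.isFiniteMeasure
  have h_exists (r : ℝ) (hr : r < 0) : ∃ μ, IsLevelMeasure (pinchedExhaustion (1 / 2)) 𝔻 r μ :=
    exists_isLevelMeasure hu.isOpen hu.contDiffOn (hu.isCompact_closure r hr)
      (hu.closure_subset r hr)
  choose! μ hμ using h_exists
  refine ⟨pinchedExhaustion (1 / 2), laplacianMeasure (pinchedExhaustion (1 / 2)) 𝔻, μ,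
    hu.isExhaustion, isRieszMeasure_laplacianMeasure hu.isOpen hu.contDiffOn hu.lap_nonneg,
    measure_lt_top _ _, fun r hr => (hμ r hr).isMAMeasure hu.isOpen hu.contDiffOn hu.lap_nonneg
      (hu.closure_subset r hr), ?_⟩
  have h_subset (f : ℂ → ℂ) : MemPS 1 𝔻 μ f → MemH1Disc f :=
    hu.memH1Disc_of_memPS hμ (c := 1 / 4) (by norm_num)
      (fun z hz => (le_lap_pinchedExhaustion (by norm_num) (by norm_num) hz).trans' (by norm_num))
      fun z hz => (pinchedExhaustion_le (by norm_num) (by norm_num) hz).trans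
        (by linarith [one_sub_norm_sq_pos hz])
  exact (ssubset_iff_of_subset h_subset).2 ⟨boundarySingularity (3 / 4),
    memH1Disc_boundarySingularity (by norm_num) (by norm_num),
    not_memPS_boundarySingularity (by norm_num) (by norm_num) (by norm_num) hμ⟩

end
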